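/- arXiv:1412.6456 — 4 statements merged into one kernel-verified Lean document; each statement's English description precedes it below -/
import Mathlib

section
/- Let R be a commutative noetherian Cohen-Macaulay local ring, M a finitely generated R-module, and p a prime ideal of R. Then the torsion submodule localizes: (t_R M)_p ≅ t_{R_p}(M_p). In particular, if M is torsion-free then M_p is a torsion-free R_p-module. -/
open RingTheory.Sequence CategoryTheory

universe u

noncomputable section

/-- Depth of a module: supremum of lengths of weakly regular sequences consisting of nonunits.
For a f.g. module over a noetherian local ring this is the usual depth, and the zero module
has depth `⊤`. -/
def rdepth (A : Type u) [CommRing A] (M : Type u) [AddCommGroup M] [Module A M] : ℕ∞ :=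
  sSup {n : ℕ∞ | ∃ rs : List A, (rs.length : ℕ∞) = n ∧ (∀ r ∈ rs, r ∈ nonunits A) ∧
    RingTheory.Sequence.IsWeaklyRegular M rs}

/-- Serre's condition `(S_n)`. -/
def SerreCond (R : Type u) [CommRing R] (M : Type u) [AddCommGroup M] [Module R M] (n : ℕ) :
    Prop :=
  ∀ (p : Ideal R) (hp : p.IsPrime), Nontrivial (LocalizedModule p.primeCompl M) →
    min (n : ℕ∞) (Order.height (⟨p, hp⟩ : PrimeSpectrum R)) ≤
      rdepth (Localization.AtPrime p) (LocalizedModule p.primeCompl M)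

/-- `Tor_i^R(M, N)` as an object of `ModuleCat R`. -/
def TorModCat (R : Type u) [CommRing R] (i : ℕ) (M N : Type u) [AddCommGroup M] [Module R M]
    [AddCommGroup N] [Module R N] : ModuleCat.{u} R :=
  ((Tor (ModuleCat.{u} R) i).obj (ModuleCat.of R M)).obj (ModuleCat.of R N)

/-- `Tor_i^R(M, N)` as a type (with its `R`-module structure given by instances below). -/
def TorM (R : Type u) [CommRing R] (i : ℕ) (M N : Type u) [AddCommGroup M] [Module R M]
    [AddCommGroup N] [Module R N] : Type u :=
  TorModCat R i M N

instance (R : Type u) [CommRing R] (i : ℕ) (M N : Type u) [AddCommGroup M] [Module R M]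
    [AddCommGroup N] [Module R N] : AddCommGroup (TorM R i M N) :=
  inferInstanceAs (AddCommGroup (TorModCat R i M N))

instance (R : Type u) [CommRing R] (i : ℕ) (M N : Type u) [AddCommGroup M] [Module R M]
    [AddCommGroup N] [Module R N] : Module R (TorM R i M N) :=
  inferInstanceAs (Module R (TorModCat R i M N))

/-- A regular local ring: noetherian local, whose maximal ideal is generated by a
(weakly) regular sequence. -/
def IsRegLocal (Q : Type u) [CommRing Q] : Prop :=
  IsNoetherianRing Q ∧ IsLocalRing Q ∧
    ∃ rs : List Q, RingTheory.Sequence.IsWeaklyRegular Q rs ∧ (∀ r ∈ rs, r ∈ nonunits Q) ∧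
      Ideal.span {x | x ∈ rs} = Ideal.span (nonunits Q)

/-- A (local) complete intersection: noetherian local ring whose completion is a regular
local ring modulo a regular sequence (of nonunits). -/
def IsCIRing (R : Type u) [CommRing R] : Prop :=
  IsNoetherianRing R ∧ IsLocalRing R ∧
    ∃ (Q : Type u) (_ : CommRing Q), IsRegLocal Q ∧
      ∃ rs : List Q, (∀ r ∈ rs, r ∈ nonunits Q) ∧ RingTheory.Sequence.IsWeaklyRegular Q rs ∧
        Nonempty ((Q ⧸ Ideal.span {x | x ∈ rs}) ≃+* AdicCompletion (Ideal.span (nonunits R)) R)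

/-- A hypersurface: noetherian local ring whose completion is a regular local ring modulo
a single non-zerodivisor in the maximal ideal. -/
def IsHypersurfaceRing (R : Type u) [CommRing R] : Prop :=
  IsNoetherianRing R ∧ IsLocalRing R ∧
    ∃ (Q : Type u) (_ : CommRing Q), IsRegLocal Q ∧
      ∃ f : Q, f ∈ nonunits Q ∧ f ∈ nonZeroDivisors Q ∧
        Nonempty ((Q ⧸ Ideal.span {f}) ≃+* AdicCompletion (Ideal.span (nonunits R)) R)

/-- Maximal Cohen-Macaulay module over a local ring: depth equals the Krull dimension. -/
def IsMCM (R : Type u) [CommRing R] (M : Type u) [AddCommGroup M] [Module R M] : Prop :=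
  (rdepth R M : WithBot ℕ∞) = ringKrullDim R

/-- Cohen-Macaulay local ring. -/
def IsCMLocalRing (A : Type u) [CommRing A] : Prop :=
  IsNoetherianRing A ∧ IsLocalRing A ∧ (rdepth A A : WithBot ℕ∞) = ringKrullDim A

/-- `M` has (constant) rank: free of the same rank at every minimal prime. -/
def HasRank (R : Type u) [CommRing R] (M : Type u) [AddCommGroup M] [Module R M] : Prop :=
  ∃ r : ℕ, ∀ (p : Ideal R) (hp : p.IsPrime), p ∈ minimalPrimes R →
    Nonempty ((LocalizedModule (@Ideal.primeCompl R _ p hp) M)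
      ≃ₗ[Localization (@Ideal.primeCompl R _ p hp)]
      (Fin r → Localization (@Ideal.primeCompl R _ p hp)))

/-- Projective dimension at most `n`. -/
def pdLE (R : Type u) [CommRing R] : ℕ → ∀ (M : Type u) [AddCommGroup M] [Module R M], Prop
  | 0, M, _, _ => Module.Projective R M
  | n+1, M, _, _ => ∃ (P : Type u) (_ : AddCommGroup P) (_ : Module R P),
      Module.Projective R P ∧ ∃ f : P →ₗ[R] M, Function.Surjective f ∧
        pdLE R n (LinearMap.ker f)

/-- Injective dimension at most `n`. -/
def idLE (R : Type u) [CommRing R] : ℕ → ∀ (M : Type u) [AddCommGroup M] [Module R M], Prop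
  | 0, M, _, _ => Module.Injective R M
  | n+1, M, _, _ => ∃ (I : Type u) (_ : AddCommGroup I) (_ : Module R I),
      Module.Injective R I ∧ ∃ f : M →ₗ[R] I, Function.Injective f ∧
        idLE R n (I ⧸ LinearMap.range f)

/-- Gorenstein local ring: noetherian local with finite self-injective dimension. -/
def IsGorensteinLocalRing (R : Type u) [CommRing R] : Prop :=
  IsNoetherianRing R ∧ IsLocalRing R ∧ ∃ n : ℕ, idLE R n R

/-- The map `M → R^ν` obtained from a free cover `ε : R^ν ↠ M^*` by dualizing and composing
with the biduality map; its cokernel is the pushforward `M₁`. -/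
def pushMap (R M : Type u) [CommRing R] [AddCommGroup M] [Module R M] {ν : ℕ}
    (ε : (Fin ν → R) →ₗ[R] Module.Dual R M) : M →ₗ[R] (Fin ν → R) where
  toFun m := fun i => ε (Pi.single i 1) m
  map_add' x y := by funext i; simp
  map_smul' r x := by funext i; simp

/-- Length of a module, as the Krull dimension of its lattice of submodules. -/
def mlen (R : Type u) [CommRing R] (M : Type u) [AddCommGroup M] [Module R M] :
    WithBot ℕ∞ :=
  Order.krullDim (Submodule R M)

/-- An unramified regular local ring: equicharacteristic (contains a field), or of mixed
characteristic `(0, p)` with `p` not in the square of the maximal ideal. -/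
def IsUnramifiedRegLocal (Q : Type u) [CommRing Q] : Prop :=
  IsRegLocal Q ∧
    ((∃ (K : Type u) (_ : Field K), Nonempty (K →+* Q)) ∨
     (CharZero Q ∧ ∃ p : ℕ, p.Prime ∧ (p : Q) ∈ nonunits Q ∧
        (p : Q) ∉ (Ideal.span (nonunits Q)) ^ 2))

/-!
If `r` in the Jacobson radical is regular on `M`, every associated prime of `M` lies strictly
below one of `M/rM`; iterating along a regular sequence, `depth R ≤ dim R/p` for every associated
prime `p` of a noetherian local ring `R`. In the Cohen-Macaulay case this forces `p` to be
minimal; so the total quotient ring `K` of `R` has dimension zero, that is, every ideal consisting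
of zero divisors lies in a minimal prime. Now let `f : R → R'` be any ring homomorphism and `f a`
a nonzerodivisor. The ideal of those `b` with `f a ∣ f b` contains `a` and `ker f`; were it
contained in a minimal prime `q` of `R`, then `q` would be the contraction of a minimal prime of
`R'`, and the latter would contain `f a`. Hence `f a` divides the image of a nonzerodivisor of
`R`. For a localization `f` this means that torsion over `R'` is already torsion over `R`.
-/

section NonZeroDivisors

open scoped nonZeroDivisors

variable {R R' : Type*} (K : Type*) [CommRing R] [CommRing R'] [CommRing K] [Algebra R K]
  [IsFractionRing R K]

theorem exists_mem_minimalPrimes_of_disjoint_nonZeroDivisors [Ring.KrullDimLE 0 K] {J : Ideal R}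
    (hJ : Disjoint (R⁰ : Set R) J) : ∃ q ∈ minimalPrimes R, J ≤ q := by
  have hJK : J.map (algebraMap R K) ≠ ⊤ :=
    (IsLocalization.map_algebraMap_ne_top_iff_disjoint R⁰ K J).2 hJ
  obtain ⟨m, hm, hJm⟩ := Ideal.exists_le_maximal _ hJK
  refine ⟨m.comap (algebraMap R K), ?_, Ideal.map_le_iff_le_comap.1 hJm⟩
  have hm' : m ∈ (⊥ : Ideal K).minimalPrimes := Ideal.mem_minimalPrimes_of_krullDimLE_zero m
  have hcomap := IsLocalization.minimalPrimes_comap R⁰ K ⊥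
  rw [Ideal.comap_bot_of_injective _ (IsFractionRing.injective R K)] at hcomap
  exact hcomap.superset (Set.mem_image_of_mem _ hm')

theorem exists_mem_nonZeroDivisors_map_dvd_map [Ring.KrullDimLE 0 K] (f : R →+* R') {a : R}
    (ha : f a ∈ R'⁰) : ∃ b ∈ R⁰, f a ∣ f b := by
  by_contra! hdvd
  have hdisj : Disjoint (R⁰ : Set R) ((Ideal.span {f a}).comap f) :=
    Set.disjoint_left.2 fun b hb hab ↦ hdvd b hb (Ideal.mem_span_singleton.1 hab)
  obtain ⟨q, hq, hle⟩ := exists_mem_minimalPrimes_of_disjoint_nonZeroDivisors K hdisj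
  have hker : q ∈ ((⊥ : Ideal R').comap f).minimalPrimes :=
    ⟨⟨hq.isPrime, (Ideal.comap_mono bot_le).trans hle⟩, fun _ h ↦ hq.2 ⟨h.1, bot_le⟩⟩
  obtain ⟨Q, hQ, rfl⟩ := Ideal.exists_minimalPrimes_comap_eq f q hker
  have haQ : f a ∈ Q := hle (Ideal.mem_comap.2 (Ideal.mem_span_singleton_self (f a)))
  exact notMem_nonZeroDivisors_of_mem_mem_minimalPrimes haQ hQ ha

open Module.associatedPrimes in
theorem krullDimLE_zero_of_associatedPrimes_subset_minimalPrimes [IsNoetherianRing R]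
    (hR : associatedPrimes R R ⊆ minimalPrimes R) : Ring.KrullDimLE 0 K := by
  have : IsNoetherianRing K := IsLocalization.isNoetherianRing R⁰ K ‹_›
  have : IsFractionRing K K := IsFractionRing.idem R K
  refine Ring.KrullDimLE.mk₀ fun P hP ↦ ?_
  obtain ⟨m, hm, hPm⟩ := Ideal.exists_le_maximal P hP.ne_top
  have hmAss : m.comap (algebraMap R K) ∈ associatedPrimes R R := by
    have hmK : m ∈ associatedPrimes K K := hm.mem_associatedPrimes_of_isFractionRing
    rwa [← preimage_comap_associatedPrimes_eq_associatedPrimes_of_isLocalizedModule R⁰ K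
      (Algebra.linearMap R K)] at hmK
  have hmMin : m ∈ ((⊥ : Ideal R).map (algebraMap R K)).minimalPrimes := by
    rw [IsLocalization.minimalPrimes_map R⁰ K]
    exact hR hmAss
  rw [Ideal.map_bot] at hmMin
  rwa [hPm.antisymm (hmMin.2 ⟨hP, bot_le⟩ hPm)]

end NonZeroDivisors

section Torsion

open scoped nonZeroDivisors

variable {R : Type*} (R' K : Type*) {M M' : Type*} [CommRing R] [CommRing R'] [Algebra R R']
  [CommRing K] [Algebra R K] [IsFractionRing R K] [AddCommGroup M] [Module R M]
  [AddCommGroup M'] [Module R M'] [Module R' M'] [IsScalarTower R R' M']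
  (S : Submonoid R) [IsLocalization S R'] (f : M →ₗ[R] M') [IsLocalizedModule S f]

theorem localized'_torsion_le :
    (Submodule.torsion R M).localized' R' S f ≤ Submodule.torsion R' M' := by
  rw [Submodule.localized'_eq_span, Submodule.span_le]
  rintro _ ⟨m, hm, rfl⟩
  obtain ⟨⟨b, hb⟩, hbm : b • m = 0⟩ := (Submodule.mem_torsion_iff m).1 hm
  have hb' : algebraMap R R' b ∈ R'⁰ := IsLocalization.map_nonZeroDivisors_le S R' ⟨b, hb, rfl⟩
  refine (Submodule.mem_torsion_iff _).2 ⟨⟨_, hb'⟩, ?_⟩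
  rw [Submonoid.mk_smul, algebraMap_smul, ← map_smul, hbm, map_zero]

theorem mem_localized'_torsion_of_smul_eq_zero {b : R} (hb : b ∈ R⁰) {y : M'} (hy : b • y = 0) :
    y ∈ (Submodule.torsion R M).localized' R' S f := by
  obtain ⟨⟨m, s⟩, rfl⟩ := IsLocalizedModule.mk'_surjective S f y
  rw [Function.uncurry_apply_pair, ← IsLocalizedModule.mk'_smul,
    IsLocalizedModule.mk'_eq_zero'] at hy
  obtain ⟨t, ht⟩ := hy
  refine ⟨t • m, (Submodule.mem_torsion_iff _).2 ⟨⟨b, hb⟩, ?_⟩, t * s,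
    IsLocalizedModule.mk'_cancel_left f m t s⟩
  rwa [Submonoid.mk_smul, smul_comm]

theorem localized'_torsion [Ring.KrullDimLE 0 K] :
    (Submodule.torsion R M).localized' R' S f = Submodule.torsion R' M' := by
  refine (localized'_torsion_le R' S f).antisymm fun y hy ↦ ?_
  obtain ⟨⟨x, hx⟩, hxy : x • y = 0⟩ := (Submodule.mem_torsion_iff y).1 hy
  obtain ⟨⟨a, s⟩, hs : x * algebraMap R R' s = algebraMap R R' a⟩ := IsLocalization.surj S x
  have ha : algebraMap R R' a ∈ R'⁰ :=
    hs ▸ mul_mem hx (IsLocalization.map_units R' s).mem_nonZeroDivisors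
  obtain ⟨b, hb, c, hc⟩ := exists_mem_nonZeroDivisors_map_dvd_map K (algebraMap R R') ha
  refine mem_localized'_torsion_of_smul_eq_zero R' S f hb ?_
  calc
    b • y = (algebraMap R R' s * c) • x • y := by
      rw [← algebraMap_smul R' b y, hc, ← hs, smul_smul]
      congr 1
      ring
    _ = 0 := by rw [hxy, smul_zero]

end Torsion

section Depth

open scoped Pointwise

variable {R : Type*} [CommRing R]

theorem eq_bot_of_le_smul_top {M : Type*} [AddCommGroup M] [Module R M] {r : R}
    (hr : r ∈ (⊥ : Ideal R).jacobson) {N : Submodule R M} (hN : N.FG)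
    (hsat : ∀ m, r • m ∈ N → m ∈ N) (hle : N ≤ r • (⊤ : Submodule R M)) : N = ⊥ := by
  refine Submodule.eq_bot_of_eq_pointwise_smul_of_mem_jacobson_annihilator hN (le_antisymm ?_ ?_)
    (Ideal.jacobson_mono bot_le hr)
  · intro n hn
    obtain ⟨m, -, rfl⟩ := (Submodule.mem_smul_pointwise_iff_exists _ _ _).1 (hle hn)
    exact Submodule.smul_mem_pointwise_smul m r N (hsat m hn)
  · exact Submodule.smul_le_self_of_tower r N

theorem torsionBySet_ne_bot_of_isAssociatedPrime [IsNoetherianRing R] {M : Type*} [AddCommGroup M]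
    [Module R M] {p : Ideal R} (hp : IsAssociatedPrime p M) :
    Submodule.torsionBySet R M p ≠ ⊥ := by
  obtain ⟨hprime, x, rfl⟩ := isAssociatedPrime_iff.1 hp
  refine Submodule.ne_bot_iff _ |>.2 ⟨x, ?_, ?_⟩
  · rw [Submodule.mem_torsionBySet_iff]
    exact fun a ↦ (Submodule.mem_bot R).1 (Submodule.mem_colon_singleton.1 a.2)
  · rintro rfl
    exact hprime.ne_top (by simp)

theorem exists_isAssociatedPrime_quotSMulTop_gt [IsNoetherianRing R] {M : Type*} [AddCommGroup M]
    [Module R M] [Module.Finite R M] {r : R} (hr : r ∈ (⊥ : Ideal R).jacobson)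
    (hreg : IsSMulRegular M r) {p : Ideal R} (hp : IsAssociatedPrime p M) :
    ∃ q, IsAssociatedPrime q (QuotSMulTop r M) ∧ p < q := by
  have hsat (m : M) (hm : r • m ∈ Submodule.torsionBySet R M p) :
      m ∈ Submodule.torsionBySet R M p := by
    rw [Submodule.mem_torsionBySet_iff] at hm ⊢
    exact fun a ↦ hreg.right_eq_zero_of_smul (by rw [smul_comm, hm a])
  obtain ⟨m, hm, hmr⟩ : ∃ m ∈ Submodule.torsionBySet R M p, m ∉ r • (⊤ : Submodule R M) :=
    SetLike.not_le_iff_exists.1 fun hle ↦ torsionBySet_ne_bot_of_isAssociatedPrime hp <|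
      eq_bot_of_le_smul_top hr (IsNoetherian.noetherian _) hsat hle
  obtain ⟨q, hq, hmq⟩ := exists_le_isAssociatedPrime_of_isNoetherianRing R
    (Submodule.Quotient.mk m : QuotSMulTop r M) (mt (Submodule.Quotient.mk_eq_zero _).1 hmr)
  have hpq : p ≤ q := fun a ha ↦ hmq <| by
    rw [Submodule.mem_colon_singleton, Submodule.mem_bot, ← Submodule.Quotient.mk_smul,
      (Submodule.mem_torsionBySet_iff _ _).1 hm ⟨a, ha⟩, Submodule.Quotient.mk_zero]
  have hrp : r ∉ p := fun hrp ↦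
    (biUnion_associatedPrimes_eq_compl_regular R M).subset (Set.mem_biUnion hp hrp) hreg
  have hrq : r ∈ q := hq.annihilator_le <| by
    rw [Submodule.annihilator_top]
    exact QuotSMulTop.mem_annihilator M r
  exact ⟨q, hq, hpq.lt_of_not_ge fun hqp ↦ hrp (hqp hrq)⟩

theorem length_le_coheight_of_isWeaklyRegular [IsNoetherianRing R] {M : Type*} [AddCommGroup M]
    [Module R M] [Module.Finite R M] {rs : List R} (hrs : ∀ r ∈ rs, r ∈ (⊥ : Ideal R).jacobson)
    (hreg : IsWeaklyRegular M rs) {p : PrimeSpectrum R} (hp : IsAssociatedPrime p.asIdeal M) :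
    rs.length ≤ Order.coheight p := by
  induction rs generalizing M p with
  | nil => simp
  | cons r rs ih =>
    rw [List.forall_mem_cons] at hrs
    rw [isWeaklyRegular_cons_iff] at hreg
    obtain ⟨q, hq, hpq⟩ := exists_isAssociatedPrime_quotSMulTop_gt hrs.1 hreg.1 hp
    calc
      ((r :: rs).length : ℕ∞) = rs.length + 1 := by simp
      _ ≤ Order.coheight (⟨q, hq.isPrime⟩ : PrimeSpectrum R) + 1 := by
        gcongr
        exact ih hrs.2 hreg.2 hq
      _ ≤ Order.coheight p := Order.coheight_add_one_le hpq

end Depth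

section CohenMacaulay

theorem rdepth_le_coheight_of_isAssociatedPrime {R : Type u} [CommRing R] [IsNoetherianRing R]
    [IsLocalRing R] {M : Type u} [AddCommGroup M] [Module R M] [Module.Finite R M]
    {p : PrimeSpectrum R} (hp : IsAssociatedPrime p.asIdeal M) :
    rdepth R M ≤ Order.coheight p := by
  refine sSup_le ?_
  rintro _ ⟨rs, rfl, hrs, hreg⟩
  refine length_le_coheight_of_isWeaklyRegular (fun r hr ↦ ?_) hreg hp
  rw [IsLocalRing.jacobson_eq_maximalIdeal ⊥ bot_ne_top]
  exact hrs r hr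

theorem isMin_of_krullDim_le_coheight {α : Type*} [Preorder α] [FiniteDimensionalOrder α] {a : α}
    (h : Order.krullDim α ≤ Order.coheight a) : IsMin a := by
  by_contra ha
  obtain ⟨b, hb⟩ := not_isMin_iff.1 ha
  have hlt : Order.coheight a < Order.coheight b :=
    Order.coheight_strictAnti hb (Order.coheight_lt_top a)
  exact (WithBot.coe_lt_coe.2 hlt).not_ge ((Order.coheight_le_krullDim b).trans h)

theorem associatedPrimes_subset_minimalPrimes {R : Type u} [CommRing R] (hCM : IsCMLocalRing R) :
    associatedPrimes R R ⊆ minimalPrimes R := by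
  intro p hp
  obtain ⟨_, _, hdepth⟩ := hCM
  refine PrimeSpectrum.isMin_iff (x := ⟨p, hp.isPrime⟩) |>.1 (isMin_of_krullDim_le_coheight ?_)
  rw [← ringKrullDim, ← hdepth]
  exact WithBot.coe_le_coe.2 (rdepth_le_coheight_of_isAssociatedPrime hp)

end CohenMacaulay

theorem stmt2_general {R M : Type*} [CommRing R] [Ring.KrullDimLE 0 (FractionRing R)]
    [AddCommGroup M] [Module R M] (S : Submonoid R) :
    Nonempty (LocalizedModule S (Submodule.torsion R M) ≃ₗ[Localization S]
      Submodule.torsion (Localization S) (LocalizedModule S M)) ∧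
    (Submodule.torsion R M = ⊥ →
      Submodule.torsion (Localization S) (LocalizedModule S M) = ⊥) := by
  rw [← localized'_torsion (Localization S) (FractionRing R) S (LocalizedModule.mkLinearMap S M)]
  refine ⟨⟨(Submodule.localizedEquiv S (Submodule.torsion R M)).symm⟩, fun htf ↦ ?_⟩
  rw [htf, Submodule.localized'_bot]

/-- over a CM local ring the torsion submodule localizes; in particular
localizations of torsion-free modules are torsion-free. -/
theorem stmt2 (R : Type u) [CommRing R] (hCM : IsCMLocalRing R)
    (M : Type u) [AddCommGroup M] [Module R M] [Module.Finite R M]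
    (p : Ideal R) [p.IsPrime] :
    Nonempty ((LocalizedModule p.primeCompl (Submodule.torsion R M))
        ≃ₗ[Localization.AtPrime p]
      (Submodule.torsion (Localization.AtPrime p) (LocalizedModule p.primeCompl M))) ∧
    (Submodule.torsion R M = ⊥ →
      Submodule.torsion (Localization.AtPrime p) (LocalizedModule p.primeCompl M) = ⊥) := by
  have := hCM.1
  have := krullDimLE_zero_of_associatedPrimes_subset_minimalPrimes (FractionRing R)
    (associatedPrimes_subset_minimalPrimes hCM)
  exact stmt2_general p.primeCompl

end
end

section
/- Let R → S be a flat local homomorphism of commutative noetherian local rings and M a finitely generated R-module. If S ⊗_R M satisfies Serre's condition (S_n) as an S-module, then M satisfies (S_n) as an R-module. -/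
open RingTheory.Sequence CategoryTheory

universe u

noncomputable section

/-! Given a prime `p` of `R`, choose a prime `q` of `S` lying over `p` and minimal among those
containing `pS`. By going down, `height p ≤ height q`, so it suffices that depth does not
increase from `M_p` to `(S ⊗ M)_q`. Here `M_p → (S ⊗ M)_q` is a faithfully flat base change along
`R_p → S_q`, whose closed fibre is artinian: the maximal ideal of `S_q` is the radical of
`𝔪 S_q`, where `𝔪` is the maximal ideal of `R_p`. A regular sequence of length `k` on `(S ⊗ M)_q`
therefore kills `Ext^i (S_q / 𝔪 S_q, (S ⊗ M)_q)` for `i < k`. The vanishing for `i = 0` descends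
along the base change and yields an `M_p`-regular element of `𝔪`; dividing by it shifts the
remaining vanishing down by one degree. -/

section Ext

universe v

open Abelian

variable {R : Type u} [CommRing R] [Small.{v} R]

lemma subsingleton_ext_quotSMulTop {X M : ModuleCat.{v} R} {r : R} (hr : IsSMulRegular M r) {i : ℕ}
    (hi : Subsingleton (Ext X M i)) (hi' : Subsingleton (Ext X M (i + 1))) :
    Subsingleton (Ext X (ModuleCat.of R (QuotSMulTop r M)) i) := by
  have hexact := Ext.covariant_sequence_exact₃' X hr.smulShortComplex_shortExact i (i + 1) rfl
  exact AddCommGrpCat.subsingleton_of_isZero <| hexact.isZero_of_both_zeros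
    ((AddCommGrpCat.isZero_of_iff_subsingleton.mpr hi).eq_zero_of_src _)
    ((AddCommGrpCat.isZero_of_iff_subsingleton.mpr hi').eq_zero_of_tgt _)

end Ext

section FaithfullyFlat

open TensorProduct Abelian

lemma subsingleton_linearMap_of_baseChange {A : Type*} (B : Type*) {P N : Type*} [CommRing A]
    [CommRing B] [Algebra A B] [Module.FaithfullyFlat A B] [AddCommGroup P] [Module A P]
    [AddCommGroup N] [Module A N] (h : Subsingleton (B ⊗[A] P →ₗ[B] B ⊗[A] N)) :
    Subsingleton (P →ₗ[A] N) := by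
  refine subsingleton_of_forall_eq 0 fun g ↦ LinearMap.ext fun x ↦ ?_
  have hg : g.baseChange B = 0 := Subsingleton.elim _ _
  rw [LinearMap.zero_apply, ← Module.FaithfullyFlat.one_tmul_eq_zero_iff A N (A := B),
    ← LinearMap.baseChange_tmul, hg, LinearMap.zero_apply]

variable {A : Type*} {B : Type u} {N : Type*} {N' : Type u} [CommRing A] [IsNoetherianRing A]
  [CommRing B] [Algebra A B] [Module.FaithfullyFlat A B] [AddCommGroup N] [Module A N]
  [Module.Finite A N] [AddCommGroup N'] [Module B N']

lemma exists_isSMulRegular_of_subsingleton_linearMap (I : Ideal A) (e : B ⊗[A] N ≃ₗ[B] N')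
    (h : Subsingleton (B ⧸ I.map (algebraMap A B) →ₗ[B] N')) :
    ∃ r ∈ I, IsSMulRegular N r := by
  let eI : (B ⧸ I.map (algebraMap A B)) ≃ₗ[B] B ⊗[A] (A ⧸ I) :=
    (Algebra.TensorProduct.quotIdealMapEquivTensorQuot B I).toLinearEquiv
  have hB : Subsingleton (B ⊗[A] (A ⧸ I) →ₗ[B] B ⊗[A] N) :=
    (eI.arrowCongr e.symm).symm.subsingleton
  have hA : Subsingleton (A ⧸ I →ₗ[A] N) := subsingleton_linearMap_of_baseChange B hB
  simpa only [Ideal.annihilator_quotient] using IsSMulRegular.subsingleton_linearMap_iff.mp hA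

lemma exists_isWeaklyRegular_of_subsingleton_ext (I : Ideal A) (e : B ⊗[A] N ≃ₗ[B] N') (k : ℕ)
    (h : ∀ i < k, Subsingleton
      (Ext (ModuleCat.of B (B ⧸ I.map (algebraMap A B))) (ModuleCat.of B N') i)) :
    ∃ rs : List A, rs.length = k ∧ (∀ r ∈ rs, r ∈ I) ∧ IsWeaklyRegular N rs := by
  induction k generalizing N N' with
  | zero => exact ⟨[], by simp⟩
  | succ k ih =>
    have hom : Subsingleton (B ⧸ I.map (algebraMap A B) →ₗ[B] N') :=
      (Ext.addEquiv₀.trans ModuleCat.homAddEquiv).symm.subsingleton_congr.mpr (h 0 k.succ_pos)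
    obtain ⟨r, hrI, hr⟩ := exists_isSMulRegular_of_subsingleton_linearMap I e hom
    have hr' : IsSMulRegular N' (algebraMap A B r) :=
      (e.isSMulRegular_congr _).mp (hr.of_flat_of_isBaseChange (TensorProduct.isBaseChange A N B))
    let e' : B ⊗[A] QuotSMulTop r N ≃ₗ[B] QuotSMulTop (algebraMap A B r) N' :=
      (QuotSMulTop.algebraMapTensorEquivTensorQuotSMulTop r N B).symm ≪≫ₗ QuotSMulTop.congr _ e
    obtain ⟨rs, hlen, hrsI, hrs⟩ := ih e' fun i hi ↦
      subsingleton_ext_quotSMulTop (M := ModuleCat.of B N') hr'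
        (h i (hi.trans k.lt_succ_self)) (h (i + 1) (Nat.succ_lt_succ hi))
    exact ⟨r :: rs, congrArg _ hlen, List.forall_mem_cons.mpr ⟨hrI, hrsI⟩, .cons hr hrs⟩

lemma exists_isWeaklyRegular_of_isRegular_baseChange [IsNoetherianRing B] (I : Ideal A)
    (e : B ⊗[A] N ≃ₗ[B] N') {rs : List B} (hrs : IsRegular N' rs)
    (hI : Ideal.ofList rs ≤ (I.map (algebraMap A B)).radical) :
    ∃ rs' : List A, rs'.length = rs.length ∧ (∀ r ∈ rs', r ∈ I) ∧ IsWeaklyRegular N rs' := by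
  have : Module.Finite B N' := .equiv e
  have hsupp : Module.support B (B ⧸ I.map (algebraMap A B)) ⊆
      PrimeSpectrum.zeroLocus (Ideal.ofList rs) := by
    rwa [Module.support_eq_zeroLocus, Ideal.annihilator_quotient,
      PrimeSpectrum.zeroLocus_subset_zeroLocus_iff]
  exact exists_isWeaklyRegular_of_subsingleton_ext I e rs.length <|
    ModuleCat.subsingleton_ext_of_exists_isRegular (Ideal.ofList rs) _ hsupp (ModuleCat.of B N')
      hrs.top_ne_smul.symm.lt_top rs (fun _ hr ↦ Ideal.subset_span hr) hrs

end FaithfullyFlat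

section Localization

open TensorProduct IsLocalRing Localization.AtPrime

variable {R S : Type*} [CommRing R] [CommRing S] [Algebra R S]

/-- The identification `U⁻¹S ⊗ T⁻¹M ≃ U⁻¹(S ⊗ M)`: localizing a base change of `M` is base changing
a localization of `M`. Any algebra structure of `U⁻¹S` over `T⁻¹R` compatible with `R → S` is
allowed. -/
def localizedModuleBaseChangeEquiv (T : Submonoid R) (U : Submonoid S)
    [Algebra (Localization T) (Localization U)]
    [IsScalarTower R (Localization T) (Localization U)] (M : Type*) [AddCommGroup M] [Module R M] :
    Localization U ⊗[Localization T] LocalizedModule T M ≃ₗ[Localization U]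
      LocalizedModule U (S ⊗[R] M) :=
  (LocalizedModule.equivTensorProduct T M).baseChange _ (Localization U) _ _ ≪≫ₗ
    AlgebraTensorModule.cancelBaseChange R (Localization T) (Localization U) (Localization U) M ≪≫ₗ
    (AlgebraTensorModule.cancelBaseChange R S (Localization U) (Localization U) M).symm ≪≫ₗ
    (LocalizedModule.equivTensorProduct U (S ⊗[R] M)).symm

lemma exists_mem_minimalPrimes_map_liesOver (p : Ideal R) (q : Ideal S) [q.IsPrime]
    [q.LiesOver p] :
    ∃ q' ∈ (p.map (algebraMap R S)).minimalPrimes, q'.LiesOver p := by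
  have hq : q.comap (algebraMap R S) = p := (q.over_def p).symm
  obtain ⟨q', hq', hle⟩ := Ideal.exists_minimalPrimes_le (Ideal.map_le_iff_le_comap.mpr hq.ge)
  exact ⟨q', hq', ⟨le_antisymm (Ideal.map_le_iff_le_comap.mp hq'.1.2)
    ((Ideal.comap_mono hle).trans_eq hq)⟩⟩

variable (p : Ideal R) (q : Ideal S) [p.IsPrime] [q.IsPrime] [q.LiesOver p]
  [Algebra (Localization.AtPrime p) (Localization.AtPrime q)] [IsLiesOverAlgebra p q]

lemma faithfullyFlat_localization_atPrime [Module.Flat R S] :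
    Module.FaithfullyFlat (Localization.AtPrime p) (Localization.AtPrime q) := by
  have : IsLocalHom (algebraMap (Localization.AtPrime p) (Localization.AtPrime q)) := by
    rw [IsLiesOverAlgebra.algebraMap_eq]
    exact Localization.isLocalHom_localRingHom p q (algebraMap R S) Ideal.LiesOver.over
  exact .of_flat_of_isLocalHom

variable {p q} in
lemma radical_map_maximalIdeal_of_mem_minimalPrimes
    (hq : q ∈ (p.map (algebraMap R S)).minimalPrimes) :
    ((maximalIdeal (Localization.AtPrime p)).map
      (algebraMap (Localization.AtPrime p) (Localization.AtPrime q))).radical =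
      maximalIdeal (Localization.AtPrime q) := by
  rw [← map_eq_maximalIdeal, ← map_eq_maximalIdeal,
    ← IsLocalization.AtPrime.radical_map_of_mem_minimalPrimes _ q _ hq, Ideal.map_map,
    Ideal.map_map, ← IsScalarTower.algebraMap_eq, ← IsScalarTower.algebraMap_eq]

lemma nontrivial_localizedModule_tensorProduct [Module.Flat R S] (M : Type*) [AddCommGroup M]
    [Module R M] [Nontrivial (LocalizedModule p.primeCompl M)] :
    Nontrivial (LocalizedModule q.primeCompl (S ⊗[R] M)) := by
  have := faithfullyFlat_localization_atPrime p q
  exact (localizedModuleBaseChangeEquiv p.primeCompl q.primeCompl M).symm.nontrivial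

end Localization

section Depth

universe v

open TensorProduct IsLocalRing

lemma rdepth_baseChange_le {A N : Type v} {B N' : Type u} [CommRing A] [IsNoetherianRing A]
    [IsLocalRing A] [CommRing B] [IsNoetherianRing B] [IsLocalRing B] [Algebra A B]
    [Module.FaithfullyFlat A B] [AddCommGroup N] [Module A N] [Module.Finite A N]
    [AddCommGroup N'] [Module B N'] [Nontrivial N'] (e : B ⊗[A] N ≃ₗ[B] N')
    (h : maximalIdeal B ≤ ((maximalIdeal A).map (algebraMap A B)).radical) :
    rdepth B N' ≤ rdepth A N := by
  have : Module.Finite B N' := .equiv e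
  refine sSup_le ?_
  rintro _ ⟨rs, rfl, hmem, hrs⟩
  obtain ⟨rs', hlen, hmem', hrs'⟩ := exists_isWeaklyRegular_of_isRegular_baseChange
    (maximalIdeal A) e (.of_isWeaklyRegular_of_mem_maximalIdeal N' hmem hrs)
    ((Ideal.span_le.mpr fun _ hr ↦ hmem _ hr).trans h)
  exact le_sSup ⟨rs', congrArg _ hlen, hmem', hrs'⟩

lemma rdepth_localizedModule_tensorProduct_le {R S : Type u} [CommRing R] [IsNoetherianRing R]
    [CommRing S] [IsNoetherianRing S] [Algebra R S] [Module.Flat R S] {p : Ideal R} {q : Ideal S}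
    [p.IsPrime] [q.IsPrime] [q.LiesOver p]
    [Algebra (Localization.AtPrime p) (Localization.AtPrime q)]
    [Localization.AtPrime.IsLiesOverAlgebra p q]
    (hq : q ∈ (p.map (algebraMap R S)).minimalPrimes) (M : Type u) [AddCommGroup M] [Module R M]
    [Module.Finite R M] [Nontrivial (LocalizedModule p.primeCompl M)] :
    rdepth (Localization.AtPrime q) (LocalizedModule q.primeCompl (S ⊗[R] M)) ≤
      rdepth (Localization.AtPrime p) (LocalizedModule p.primeCompl M) := by
  have := faithfullyFlat_localization_atPrime p q
  have := nontrivial_localizedModule_tensorProduct p q M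
  exact rdepth_baseChange_le (N := LocalizedModule p.primeCompl M)
    (N' := LocalizedModule q.primeCompl (S ⊗[R] M))
    (localizedModuleBaseChangeEquiv p.primeCompl q.primeCompl M)
    (radical_map_maximalIdeal_of_mem_minimalPrimes hq).ge

end Depth

theorem stmt4_general (R S : Type u) [CommRing R] [CommRing S] [IsNoetherianRing R]
    [IsNoetherianRing S] [Algebra R S] [Module.FaithfullyFlat R S]
    (M : Type u) [AddCommGroup M] [Module R M] [Module.Finite R M] (n : ℕ)
    (h : SerreCond S (TensorProduct R S M) n) :
    SerreCond R M n := by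
  intro p hp hM
  obtain ⟨Q, _, _⟩ := Ideal.exists_isPrime_liesOver_of_faithfullyFlat (B := S) p
  obtain ⟨q, hq, _⟩ := exists_mem_minimalPrimes_map_liesOver p Q
  have : q.IsPrime := hq.1.1
  have hheight : p.height ≤ q.height :=
    Ideal.height_eq_height_add_of_liesOver_of_hasGoingDown p q ▸ le_self_add
  let := Localization.AtPrime.algebraOfLiesOver p q
  have hM' := nontrivial_localizedModule_tensorProduct p q M
  have hdepth := rdepth_localizedModule_tensorProduct_le hq M
  have hSerre := h q hq.1.1 hM'
  rw [← PrimeSpectrum.height_eq_orderHeight] at hSerre ⊢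
  exact (min_le_min_left _ hheight).trans (hSerre.trans hdepth)

/-- Serre's condition `(S_n)` descends along flat local homomorphisms. -/
theorem stmt4 (R S : Type u) [CommRing R] [CommRing S] [IsNoetherianRing R] [IsNoetherianRing S]
    [IsLocalRing R] [IsLocalRing S] [Algebra R S] [Module.Flat R S]
    (hloc : IsLocalHom (algebraMap R S))
    (M : Type u) [AddCommGroup M] [Module R M] [Module.Finite R M] (n : ℕ)
    (h : SerreCond S (TensorProduct R S M) n) :
    SerreCond R M n := by
  have := Module.FaithfullyFlat.of_flat_of_isLocalHom (A := R) (B := S)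
  exact stmt4_general R S M n h

end
end

section
/- Let R → S be a flat local homomorphism of commutative noetherian local rings whose fibers S_q/pS_q are Cohen-Macaulay, and let M be a finitely generated R-module satisfying Serre's condition (S_n). Then S ⊗_R M satisfies (S_n) as an S-module. -/
open RingTheory.Sequence CategoryTheory

universe u

noncomputable section

/-!
Let `A → B` be a local homomorphism of noetherian local rings, `𝔪` the maximal ideal of `A`, `N` a
finite `A`-module and `T` a finite `B`-module that is flat over `A`. The key inequality is
`depth N + depth (T ⊗ A/𝔪) ≤ depth (T ⊗ N)`: a sequence `as` regular on `N` stays regular on `T ⊗ N`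
by flatness, and a sequence `bs` regular on `T ⊗ A/𝔪` is regular on `T ⊗ N'` for every finite `N'`,
in particular for `N' = N / (as) N`. The latter holds by dévissage along the `𝔪`-adic filtration if
`𝔪 ^ k N' = 0`, and in general because Krull's intersection theorem detects regularity modulo all
powers of `𝔪 B`. Together with `dim B ≤ dim A + dim (B / 𝔪 B)` this gives the depth bound required
for `(S_n)` at each prime, taking `A → B` to be `R_p → S_q`.
-/

open IsLocalRing
open scoped TensorProduct

section WeaklyRegular

variable {B : Type*} [CommRing B]

theorem isWeaklyRegular_of_exact {M₁ M₂ M₃ : Type*} [AddCommGroup M₁] [AddCommGroup M₂]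
    [AddCommGroup M₃] [Module B M₁] [Module B M₂] [Module B M₃] {f : M₁ →ₗ[B] M₂}
    {g : M₂ →ₗ[B] M₃} (hf : Function.Injective f) (hfg : Function.Exact f g)
    (hg : Function.Surjective g) {rs : List B} (h₁ : IsWeaklyRegular M₁ rs)
    (h₃ : IsWeaklyRegular M₃ rs) : IsWeaklyRegular M₂ rs := by
  induction rs generalizing M₁ M₂ M₃ with
  | nil => exact .nil B M₂
  | cons r rs ih =>
    rw [isWeaklyRegular_cons_iff] at h₁ h₃ ⊢
    have hzero : Function.Exact (0 : PUnit →ₗ[B] M₁) f :=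
      (LinearMap.exact_zero_iff_injective PUnit f).mpr hf
    have hinj : Function.Injective (QuotSMulTop.map r f) := by
      have := QuotSMulTop.map_first_exact_on_four_term_exact_of_isSMulRegular_last hzero hfg h₃.1
      rw [map_zero] at this
      exact (LinearMap.exact_zero_iff_injective _ _).mp this
    exact ⟨isSMulRegular_of_range_eq_ker hf hfg.linearMap_ker_eq.symm h₁.1 h₃.1,
      ih hinj (QuotSMulTop.map_exact r hfg hg) (QuotSMulTop.map_surjective r hg) h₁.2 h₃.2⟩

theorem isWeaklyRegular_of_subsingleton (M : Type*) [AddCommGroup M] [Module B M] [Subsingleton M]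
    (rs : List B) : IsWeaklyRegular M rs :=
  (isWeaklyRegular_iff M rs).mpr fun _ _ ↦ Function.injective_of_subsingleton _

theorem isWeaklyRegular_finsupp (ι : Type*) {M : Type*} [AddCommGroup M] [Module B M]
    {rs : List B} (h : IsWeaklyRegular M rs) : IsWeaklyRegular (ι →₀ M) rs := by
  classical
  exact ((TensorProduct.finsuppScalarRight B B M ι).isWeaklyRegular_congr rs).mp
    h.isWeaklyRegular_rTensor

theorem isSMulRegular_of_iInf_eq_bot {X ι : Type*} [AddCommGroup X] [Module B X]
    {K : ι → Submodule B X} (hK : ⨅ i, K i = ⊥) {r : B} (h : ∀ i, IsSMulRegular (X ⧸ K i) r) :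
    IsSMulRegular X r := by
  refine .of_right_eq_zero_of_smul fun x hx ↦ ?_
  rw [← Submodule.mem_bot B, ← hK, Submodule.mem_iInf]
  exact fun i ↦ mem_of_isSMulRegular_quotient_of_smul_mem (h i) (hx ▸ zero_mem _)

/-- Quotients by an element and by an ideal commute: `(X / rX) / J(X / rX) ≃ (X / JX) / r(X / JX)`,
used to pass from `X` to `X / rX` in inductions along a sequence. -/
def quotSMulTopQuotientEquiv (X : Type*) [AddCommGroup X] [Module B X] (r : B) (J : Ideal B) :
    (QuotSMulTop r X ⧸ (J • ⊤ : Submodule B (QuotSMulTop r X))) ≃ₗ[B]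
      QuotSMulTop r (X ⧸ (J • ⊤ : Submodule B X)) :=
  (TensorProduct.tensorQuotEquivQuotSMul (QuotSMulTop r X) J).symm ≪≫ₗ
    QuotSMulTop.quotSMulTopTensorEquivQuotSMulTop r (B ⧸ J) X ≪≫ₗ
      QuotSMulTop.congr r (TensorProduct.tensorQuotEquivQuotSMul X J)

theorem isWeaklyRegular_of_forall_quotient_pow_smul_top [IsNoetherianRing B] {X : Type*}
    [AddCommGroup X] [Module B X] [Module.Finite B X] {J : Ideal B} (hJ : J ≤ Ideal.jacobson ⊥)
    {rs : List B} (h : ∀ k : ℕ, IsWeaklyRegular (X ⧸ (J ^ k • ⊤ : Submodule B X)) rs) :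
    IsWeaklyRegular X rs := by
  induction rs generalizing X with
  | nil => exact .nil B X
  | cons r rs ih =>
    simp only [isWeaklyRegular_cons_iff] at h ⊢
    exact ⟨isSMulRegular_of_iInf_eq_bot (J.iInf_pow_smul_eq_bot_of_le_jacobson hJ) fun k ↦ (h k).1,
      ih fun k ↦ ((quotSMulTopQuotientEquiv X r (J ^ k)).isWeaklyRegular_congr rs).mpr (h k).2⟩

end WeaklyRegular

section BaseChange

variable {A B T N : Type*} [CommRing A] [CommRing B] [Algebra A B]
  [AddCommGroup T] [Module A T] [Module B T] [IsScalarTower A B T] [AddCommGroup N] [Module A N]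

variable (B T N) in
/-- `T ⊗ N / IN ≃ (T ⊗ N) / IB(T ⊗ N)` for a `B`-module `T`; the `B`-linearity is what transports
sequences in `B` along this map. -/
def tensorQuotEquivQuotMapSMul (I : Ideal A) :
    T ⊗[A] (N ⧸ (I • ⊤ : Submodule A N)) ≃ₗ[B]
      (T ⊗[A] N) ⧸ (I.map (algebraMap A B) • ⊤ : Submodule B (T ⊗[A] N)) :=
  (TensorProduct.AlgebraTensorModule.cancelBaseChange A B B T _).symm ≪≫ₗ
    LinearEquiv.lTensor T (TensorProduct.tensorQuotMapSMulEquivTensorQuot N B I).symm ≪≫ₗ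
    LinearEquiv.lTensor T (TensorProduct.tensorQuotEquivQuotSMul (B ⊗[A] N) _).symm ≪≫ₗ
    (TensorProduct.assoc B T (B ⊗[A] N) _).symm ≪≫ₗ
    LinearEquiv.rTensor _ (TensorProduct.AlgebraTensorModule.cancelBaseChange A B B T N) ≪≫ₗ
    TensorProduct.tensorQuotEquivQuotSMul (T ⊗[A] N) (I.map (algebraMap A B))

theorem isWeaklyRegular_tensor_of_submodule_of_quotient [Module.Flat A T] {rs : List B}
    (K : Submodule A N) (hK : IsWeaklyRegular (T ⊗[A] K) rs)
    (hQ : IsWeaklyRegular (T ⊗[A] (N ⧸ K)) rs) :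
    IsWeaklyRegular (T ⊗[A] N) rs :=
  isWeaklyRegular_of_exact
    (f := TensorProduct.AlgebraTensorModule.lTensor B T K.subtype)
    (g := TensorProduct.AlgebraTensorModule.lTensor B T K.mkQ)
    (Module.Flat.lTensor_preserves_injective_linearMap K.subtype K.subtype_injective)
    (lTensor_exact T (LinearMap.exact_subtype_mkQ K) K.mkQ_surjective)
    (LinearMap.lTensor_surjective T K.mkQ_surjective) hK hQ

variable {𝔪 : Ideal A} {rs : List B}

theorem isWeaklyRegular_tensor_of_free {V : Type*} [AddCommGroup V] [Module A V]
    [Module (A ⧸ 𝔪) V] [IsScalarTower A (A ⧸ 𝔪) V] [Module.Free (A ⧸ 𝔪) V]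
    (h : IsWeaklyRegular (T ⊗[A] (A ⧸ 𝔪)) rs) : IsWeaklyRegular (T ⊗[A] V) rs := by
  classical
  let e : T ⊗[A] V ≃ₗ[B] _ →₀ T ⊗[A] (A ⧸ 𝔪) :=
    TensorProduct.AlgebraTensorModule.congr (.refl B T)
      ((Module.Free.chooseBasis (A ⧸ 𝔪) V).repr.restrictScalars A) ≪≫ₗ
      TensorProduct.finsuppRight A B T (A ⧸ 𝔪) _
  exact (e.isWeaklyRegular_congr rs).mpr (isWeaklyRegular_finsupp _ h)

theorem isWeaklyRegular_tensor_of_pow_smul_top_eq_bot [𝔪.IsMaximal] [Module.Flat A T]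
    (h : IsWeaklyRegular (T ⊗[A] (A ⧸ 𝔪)) rs) {k : ℕ}
    (hN : (𝔪 ^ k • ⊤ : Submodule A N) = ⊥) : IsWeaklyRegular (T ⊗[A] N) rs := by
  induction k generalizing N with
  | zero =>
    have : Subsingleton N := by
      rw [← Submodule.subsingleton_iff A, ← subsingleton_iff_bot_eq_top]
      simpa using hN.symm
    exact isWeaklyRegular_of_subsingleton _ rs
  | succ k ih =>
    let _ := Ideal.Quotient.field 𝔪
    refine isWeaklyRegular_tensor_of_submodule_of_quotient (𝔪 • ⊤ : Submodule A N) (ih ?_)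
      (isWeaklyRegular_tensor_of_free h)
    apply Submodule.map_injective_of_injective (Submodule.subtype_injective (𝔪 • ⊤))
    rw [Submodule.map_smul'', Submodule.map_top, Submodule.range_subtype, Submodule.map_bot,
      ← Submodule.mul_smul, ← pow_succ, hN]

theorem isWeaklyRegular_tensor_of_isWeaklyRegular_tensor_quotient [𝔪.IsMaximal] [IsNoetherianRing B]
    (h𝔪 : 𝔪.map (algebraMap A B) ≤ Ideal.jacobson ⊥) [Module.Flat A T] [Module.Finite B T]
    [Module.Finite A N] (h : IsWeaklyRegular (T ⊗[A] (A ⧸ 𝔪)) rs) :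
    IsWeaklyRegular (T ⊗[A] N) rs := by
  have : Module.Finite B (T ⊗[A] N) :=
    .equiv (TensorProduct.AlgebraTensorModule.cancelBaseChange A B B T N)
  refine isWeaklyRegular_of_forall_quotient_pow_smul_top h𝔪 fun k ↦ ?_
  rw [← Ideal.map_pow, ← (tensorQuotEquivQuotMapSMul B T N (𝔪 ^ k)).isWeaklyRegular_congr]
  refine isWeaklyRegular_tensor_of_pow_smul_top_eq_bot h (k := k) ?_
  rw [← Submodule.range_mkQ, ← Submodule.map_top, ← Submodule.map_smul'', Submodule.mkQ_map_self]

theorem isWeaklyRegular_map_append_tensor [𝔪.IsMaximal] [IsNoetherianRing B]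
    (h𝔪 : 𝔪.map (algebraMap A B) ≤ Ideal.jacobson ⊥) [Module.Flat A T] [Module.Finite B T]
    [Module.Finite A N] {as : List A} (has : IsWeaklyRegular N as)
    (h : IsWeaklyRegular (T ⊗[A] (A ⧸ 𝔪)) rs) :
    IsWeaklyRegular (T ⊗[A] N) (as.map (algebraMap A B) ++ rs) := by
  refine (isWeaklyRegular_append_iff _ _ _).mpr ⟨?_, ?_⟩
  · exact (isWeaklyRegular_map_algebraMap_iff B _ as).mpr has.isWeaklyRegular_lTensor
  · rw [← Ideal.map_ofList,
      ← (tensorQuotEquivQuotMapSMul B T N (Ideal.ofList as)).isWeaklyRegular_congr]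
    exact isWeaklyRegular_tensor_of_isWeaklyRegular_tensor_quotient h𝔪 h

end BaseChange

section Depth

variable {A B : Type u} [CommRing A] [CommRing B]

theorem rdepth_congr {M N : Type u} [AddCommGroup M] [Module B M] [AddCommGroup N] [Module B N]
    (e : M ≃ₗ[B] N) : rdepth B M = rdepth B N := by
  simp only [rdepth, e.isWeaklyRegular_congr]

variable [Algebra A B]

theorem rdepth_le_rdepth_of_surjective (hAB : Function.Surjective (algebraMap A B)) (M : Type u)
    [AddCommGroup M] [Module A M] [Module B M] [IsScalarTower A B M] :
    rdepth B M ≤ rdepth A M := by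
  refine sSup_le ?_
  rintro _ ⟨bs, rfl, hbs, hreg⟩
  obtain ⟨as, rfl⟩ := List.map_surjective_iff.mpr hAB bs
  refine le_sSup ⟨as, by simp, fun a ha hu ↦ ?_,
    (isWeaklyRegular_map_algebraMap_iff B M as).mp hreg⟩
  exact hbs _ (List.mem_map_of_mem ha) (hu.map _)

variable [IsLocalRing A] [IsLocalRing B] [IsNoetherianRing B] [IsLocalHom (algebraMap A B)]

theorem rdepth_add_rdepth_le_rdepth_tensor (T N : Type u) [AddCommGroup T] [Module A T]
    [Module B T] [IsScalarTower A B T] [Module.Flat A T] [Module.Finite B T] [AddCommGroup N]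
    [Module A N] [Module.Finite A N] :
    rdepth A N + rdepth B (T ⊗[A] (A ⧸ maximalIdeal A)) ≤ rdepth B (T ⊗[A] N) := by
  rw [rdepth, rdepth, sSup_eq_iSup, sSup_eq_iSup]
  refine ENat.biSup_add_biSup_le (f := fun a ↦ a) (g := fun b ↦ b) ?_ ?_ ?_
  · exact ⟨0, [], by simp⟩
  · exact ⟨0, [], by simp⟩
  rintro _ ⟨as, rfl, has, hN⟩ _ ⟨bs, rfl, hbs, hT⟩
  refine le_sSup ⟨as.map (algebraMap A B) ++ bs, by simp, fun r hr ↦ ?_,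
    isWeaklyRegular_map_append_tensor
      ((map_maximalIdeal_le _).trans (maximalIdeal_le_jacobson ⊥)) hN hT⟩
  rcases List.mem_append.mp hr with hr | hr
  · obtain ⟨a, ha, rfl⟩ := List.mem_map.mp hr
    exact fun hu ↦ has a ha (isUnit_of_map_unit _ _ hu)
  · exact hbs r hr

theorem rdepth_add_rdepth_quotient_le_rdepth_baseChange [Module.Flat A B] (N : Type u)
    [AddCommGroup N] [Module A N] [Module.Finite A N] :
    rdepth A N + rdepth (B ⧸ (maximalIdeal A).map (algebraMap A B))
      (B ⧸ (maximalIdeal A).map (algebraMap A B)) ≤ rdepth B (B ⊗[A] N) := by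
  refine le_trans ?_ (rdepth_add_rdepth_le_rdepth_tensor B N)
  gcongr
  exact (rdepth_le_rdepth_of_surjective Ideal.Quotient.mk_surjective _).trans_eq
    (rdepth_congr
      (Algebra.TensorProduct.quotIdealMapEquivTensorQuot B (maximalIdeal A)).toLinearEquiv)

theorem ringKrullDim_le_add_ringKrullDim_quotient_map_maximalIdeal [IsNoetherianRing A] :
    ringKrullDim B ≤
      ringKrullDim A + ringKrullDim (B ⧸ (maximalIdeal A).map (algebraMap A B)) := by
  have : Nontrivial (B ⧸ (maximalIdeal A).map (algebraMap A B)) :=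
    Ideal.Quotient.nontrivial_iff.mpr (map_maximalIdeal_lt_top _).ne
  have : IsLocalRing (B ⧸ (maximalIdeal A).map (algebraMap A B)) :=
    .of_surjective' _ Ideal.Quotient.mk_surjective
  simp only [← maximalIdeal_height_eq_ringKrullDim]
  rw [← map_maximalIdeal_of_surjective _ Ideal.Quotient.mk_surjective]
  exact_mod_cast Ideal.height_le_height_add_of_liesOver (maximalIdeal A) (maximalIdeal B)

theorem min_add_le_min_add_min (n : ℕ∞) (a b : WithBot ℕ∞) :
    min (n : WithBot ℕ∞) (a + b) ≤ min (n : WithBot ℕ∞) a + min (n : WithBot ℕ∞) b := by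
  induction a with
  | bot => simp
  | coe a =>
  induction b with
  | bot => simp
  | coe b =>
  norm_cast
  rcases le_total n a with ha | ha
  · exact (min_le_left _ _).trans ((min_eq_left ha).symm.le.trans le_self_add)
  rcases le_total n b with hb | hb
  · exact (min_le_left _ _).trans ((min_eq_left hb).symm.le.trans le_add_self)
  · rw [min_eq_right ha, min_eq_right hb]
    exact min_le_right _ _

theorem min_ringKrullDim_le_rdepth_baseChange [IsNoetherianRing A] [Module.Flat A B] (n : ℕ∞)
    (N : Type u) [AddCommGroup N] [Module A N] [Module.Finite A N]
    (hN : min (n : WithBot ℕ∞) (ringKrullDim A) ≤ rdepth A N)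
    (hB : min (n : WithBot ℕ∞) (ringKrullDim (B ⧸ (maximalIdeal A).map (algebraMap A B))) ≤
      rdepth (B ⧸ (maximalIdeal A).map (algebraMap A B))
        (B ⧸ (maximalIdeal A).map (algebraMap A B))) :
    min (n : WithBot ℕ∞) (ringKrullDim B) ≤ rdepth B (B ⊗[A] N) :=
  calc
    _ ≤ min (n : WithBot ℕ∞)
        (ringKrullDim A + ringKrullDim (B ⧸ (maximalIdeal A).map (algebraMap A B))) :=
      min_le_min_left _ ringKrullDim_le_add_ringKrullDim_quotient_map_maximalIdeal
    _ ≤ _ := min_add_le_min_add_min n _ _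
    _ ≤ _ := add_le_add hN hB
    _ ≤ _ := by exact_mod_cast rdepth_add_rdepth_quotient_le_rdepth_baseChange N

end Depth

section Localization

variable {R S : Type u} [CommRing R] [CommRing S] [Algebra R S]

theorem serreCond_iff {M : Type u} [AddCommGroup M] [Module R M] {n : ℕ} :
    SerreCond R M n ↔ ∀ (p : Ideal R) [p.IsPrime], Nontrivial (LocalizedModule p.primeCompl M) →
      min ((n : ℕ∞) : WithBot ℕ∞) (ringKrullDim (Localization.AtPrime p)) ≤
        rdepth (Localization.AtPrime p) (LocalizedModule p.primeCompl M) := by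
  refine forall₂_congr fun p hp ↦ imp_congr_right fun _ ↦ ?_
  rw [IsLocalization.AtPrime.ringKrullDim_eq_height p,
    PrimeSpectrum.height_eq_orderHeight ⟨p, hp⟩]
  norm_cast

/-- The local ring `S_q / p S_q` at `q` of the fibre of `R → S` over the contraction `p` of `q`. -/
abbrev FibreLocalRing (R : Type u) {S : Type u} [CommRing R] [CommRing S] [Algebra R S]
    (q : Ideal S) [q.IsPrime] : Type u :=
  Localization.AtPrime q ⧸ (q.comap (algebraMap R S)).map
    ((algebraMap S (Localization.AtPrime q)).comp (algebraMap R S))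

variable (p : Ideal R) [p.IsPrime] (q : Ideal S) [q.IsPrime] [q.LiesOver p]

attribute [local instance] Localization.AtPrime.algebraOfLiesOver

theorem map_maximalIdeal_localization_atPrime :
    (maximalIdeal (Localization.AtPrime p)).map
      (algebraMap (Localization.AtPrime p) (Localization.AtPrime q)) =
    (q.comap (algebraMap R S)).map
      ((algebraMap S (Localization.AtPrime q)).comp (algebraMap R S)) := by
  rw [← Localization.AtPrime.map_eq_maximalIdeal, Ideal.map_map,
    ← IsScalarTower.algebraMap_eq R (Localization.AtPrime p) (Localization.AtPrime q),
    ← IsScalarTower.algebraMap_eq R S (Localization.AtPrime q),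
    Ideal.LiesOver.over (p := p) (P := q)]

/-- The localization of `S ⊗ M` at `q` as the base change along `R_p → S_q` of the localization of
`M` at `p`, where `q` lies over `p`. -/
def localizedModuleTensorEquiv (M : Type u) [AddCommGroup M] [Module R M] :
    LocalizedModule q.primeCompl (S ⊗[R] M) ≃ₗ[Localization.AtPrime q]
      Localization.AtPrime q ⊗[Localization.AtPrime p] LocalizedModule p.primeCompl M :=
  (IsLocalizedModule.isBaseChange q.primeCompl (Localization.AtPrime q)
      (LocalizedModule.mkLinearMap q.primeCompl (S ⊗[R] M))).equiv.symm ≪≫ₗ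
    TensorProduct.AlgebraTensorModule.cancelBaseChange R S (Localization.AtPrime q) _ M ≪≫ₗ
    (TensorProduct.AlgebraTensorModule.cancelBaseChange R (Localization.AtPrime p)
      (Localization.AtPrime q) _ M).symm ≪≫ₗ
    TensorProduct.AlgebraTensorModule.congr (.refl _ _)
      (IsLocalizedModule.isBaseChange p.primeCompl (Localization.AtPrime p)
        (LocalizedModule.mkLinearMap p.primeCompl M)).equiv

end Localization

/-- Every local ring of a fibre of `R → S` is some `S_q / p S_q`, so `hfib` says that the fibres
satisfy `(S_n)`. -/
theorem stmt5_general (R S : Type u) [CommRing R] [CommRing S] [IsNoetherianRing R]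
    [IsNoetherianRing S] [Algebra R S] [Module.Flat R S] (n : ℕ)
    (hfib : ∀ (q : Ideal S) [q.IsPrime],
      min ((n : ℕ∞) : WithBot ℕ∞) (ringKrullDim (FibreLocalRing R q)) ≤
        rdepth (FibreLocalRing R q) (FibreLocalRing R q))
    (M : Type u) [AddCommGroup M] [Module R M] [Module.Finite R M]
    (h : SerreCond R M n) :
    SerreCond S (S ⊗[R] M) n := by
  rw [serreCond_iff] at h ⊢
  intro q _ _
  let p := q.under R
  let _ := Localization.AtPrime.algebraOfLiesOver p q
  have : IsNoetherianRing (Localization.AtPrime p) :=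
    IsLocalization.isNoetherianRing p.primeCompl _ inferInstance
  have : IsNoetherianRing (Localization.AtPrime q) :=
    IsLocalization.isNoetherianRing q.primeCompl _ inferInstance
  have : IsLocalHom (algebraMap (Localization.AtPrime p) (Localization.AtPrime q)) :=
    Localization.isLocalHom_localRingHom p q (algebraMap R S) Ideal.LiesOver.over
  have hM : Nontrivial (LocalizedModule p.primeCompl M) := by
    by_contra hM
    rw [not_nontrivial_iff_subsingleton] at hM
    exact not_subsingleton _ (localizedModuleTensorEquiv p q M).subsingleton
  rw [rdepth_congr (localizedModuleTensorEquiv p q M)]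
  refine min_ringKrullDim_le_rdepth_baseChange n _ (h p hM) ?_
  rw [map_maximalIdeal_localization_atPrime]
  exact hfib q

/-- Serre's condition `(S_n)` ascends along flat local homomorphisms with
Cohen-Macaulay fibers. -/
theorem stmt5 (R S : Type u) [CommRing R] [CommRing S] [IsNoetherianRing R] [IsNoetherianRing S]
    [IsLocalRing R] [IsLocalRing S] [Algebra R S] [Module.Flat R S]
    (hloc : IsLocalHom (algebraMap R S))
    (hfib : ∀ (q : Ideal S) (hq : q.IsPrime),
      IsCMLocalRing ((Localization.AtPrime q) ⧸
        ((q.comap (algebraMap R S)).map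
          ((algebraMap S (Localization.AtPrime q)).comp (algebraMap R S)))))
    (M : Type u) [AddCommGroup M] [Module R M] [Module.Finite R M] (n : ℕ)
    (h : SerreCond R M n) :
    SerreCond S (TensorProduct R S M) n :=
  stmt5_general R S n (fun q hq ↦ (min_le_right _ _).trans (hfib q hq).2.2.ge) M h

end
end

section
/- Let R be a Gorenstein local ring, M a finitely generated torsion-free R-module with pushforward M_1, and p a prime ideal of R. If M_p is maximal Cohen-Macaulay over R_p, then (M_1)_p is either zero or maximal Cohen-Macaulay over R_p. -/
open RingTheory.Sequence CategoryTheory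

universe u

noncomputable section

/-!
Let `A` be a Gorenstein local ring of self-injective dimension `n`. Since `Ext^n(k, A) ≠ 0`,
cutting down by regular elements gives Ischebeck's formula
`depth N = n - sup {i | Ext^i(N, A) ≠ 0}`. So a maximal Cohen-Macaulay module can exist only when
`dim A = n`, and being maximal Cohen-Macaulay then means being nonzero with `Ext^i(N, A) = 0` for
all `i > 0`. Such an `N` is reflexive: this vanishing passes to syzygies and to duals, so a
presentation of `N` stays exact under double dualization.

The map `f = pushMap R M ε : M → R^ν` is built so that every functional on `M` extends along `f`, a
property which survives localization at `p`. As `M_p` is reflexive, extending functionals makes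
`f_p` injective. In `0 → M_p → R_p^ν → (M₁)_p → 0` the extension property says exactly that
`Ext^1((M₁)_p, R_p) = 0`, and the higher `Ext` vanish by dimension shifting.
-/

open Abelian IsLocalRing
open scoped Pointwise

section Ext

variable {C : Type*} [Category C] [Abelian C]

lemma exists_injectiveDimension_eq {X : C} (hbot : ¬ Limits.IsZero X)
    (htop : injectiveDimension X ≠ ⊤) : ∃ n : ℕ, injectiveDimension X = n := by
  obtain ⟨d, hd⟩ := WithBot.ne_bot_iff_exists.1
    fun h => hbot ((injectiveDimension_eq_bot_iff X).1 h)
  rw [← hd] at htop ⊢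
  obtain ⟨n, rfl⟩ := ENat.ne_top_iff_exists.1 fun h => htop (congrArg _ h)
  exact ⟨n, rfl⟩

variable [HasExt C] {S : ShortComplex C}

lemma subsingleton_ext_X₁ (hS : S.ShortExact) {Y : C} {i : ℕ}
    (h₂ : Subsingleton (Ext S.X₂ Y i)) (h₃ : Subsingleton (Ext S.X₃ Y (i + 1))) :
    Subsingleton (Ext S.X₁ Y i) := by
  refine subsingleton_of_forall_eq 0 fun x => ?_
  obtain ⟨y, rfl⟩ := Ext.contravariant_sequence_exact₁ hS Y x (add_comm 1 i) (Subsingleton.elim _ _)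
  rw [Subsingleton.elim y 0, Ext.comp_zero]

lemma subsingleton_ext_X₂ (hS : S.ShortExact) {Y : C} {i : ℕ}
    (h₁ : Subsingleton (Ext S.X₁ Y i)) (h₃ : Subsingleton (Ext S.X₃ Y i)) :
    Subsingleton (Ext S.X₂ Y i) := by
  refine subsingleton_of_forall_eq 0 fun x => ?_
  obtain ⟨y, rfl⟩ := Ext.contravariant_sequence_exact₂ hS Y x (Subsingleton.elim _ _)
  rw [Subsingleton.elim y 0, Ext.comp_zero]

lemma subsingleton_ext_zero_X₃ (hS : S.ShortExact) {Y : C} (h₂ : Subsingleton (Ext S.X₂ Y 0)) :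
    Subsingleton (Ext S.X₃ Y 0) := by
  have := hS.epi_g
  have : Subsingleton (S.X₂ ⟶ Y) := Ext.homEquiv₀.subsingleton_congr.1 h₂
  exact Ext.homEquiv₀.subsingleton_congr.2
    ⟨fun φ ψ => (cancel_epi S.g).1 (Subsingleton.elim _ _)⟩

lemma subsingleton_ext_X₃ (hS : S.ShortExact) {Y : C} {i : ℕ}
    (h₁ : Subsingleton (Ext S.X₁ Y i)) (h₂ : Subsingleton (Ext S.X₂ Y (i + 1))) :
    Subsingleton (Ext S.X₃ Y (i + 1)) := by
  refine subsingleton_of_forall_eq 0 fun x => ?_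
  obtain ⟨y, rfl⟩ := Ext.contravariant_sequence_exact₃ hS Y x (Subsingleton.elim _ _) (add_comm 1 i)
  rw [Subsingleton.elim y 0, Ext.comp_zero]

lemma subsingleton_ext_one_X₃_iff (hS : S.ShortExact) {Y : C}
    (h₂ : Subsingleton (Ext S.X₂ Y 1)) :
    Subsingleton (Ext S.X₃ Y 1) ↔ ∀ φ : S.X₁ ⟶ Y, ∃ ψ : S.X₂ ⟶ Y, S.f ≫ ψ = φ := by
  refine ⟨fun h₃ φ => ?_, fun hext => subsingleton_of_forall_eq 0 fun x => ?_⟩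
  · obtain ⟨y, hy⟩ := Ext.contravariant_sequence_exact₁ hS Y (Ext.mk₀ φ) (add_zero 1)
      (Subsingleton.elim _ _)
    obtain ⟨ψ, rfl⟩ := (Ext.mk₀_bijective _ _).2 y
    rw [Ext.mk₀_comp_mk₀] at hy
    exact ⟨ψ, (Ext.mk₀_bijective _ _).1 hy⟩
  · obtain ⟨y, rfl⟩ := Ext.contravariant_sequence_exact₃ hS Y x (Subsingleton.elim _ _)
      (add_zero 1)
    obtain ⟨φ, rfl⟩ := (Ext.mk₀_bijective _ _).2 y
    obtain ⟨ψ, rfl⟩ := hext φ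
    rw [← Ext.mk₀_comp_mk₀, hS.extClass_comp_assoc]

lemma subsingleton_covariant_ext_X₃_iff (hS : S.ShortExact) {X : C} {i : ℕ}
    (h₂ : Subsingleton (Ext X S.X₂ (i + 1))) (h₂' : Subsingleton (Ext X S.X₂ (i + 2))) :
    Subsingleton (Ext X S.X₃ (i + 1)) ↔ Subsingleton (Ext X S.X₁ (i + 2)) := by
  refine ⟨fun h₃ => subsingleton_of_forall_eq 0 fun x => ?_,
    fun h₁ => subsingleton_of_forall_eq 0 fun x => ?_⟩
  · obtain ⟨y, rfl⟩ := Ext.covariant_sequence_exact₁ X hS x (Subsingleton.elim _ _) rfl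
    rw [Subsingleton.elim y 0, Ext.zero_comp]
  · obtain ⟨y, rfl⟩ := Ext.covariant_sequence_exact₃ X hS x rfl (Subsingleton.elim _ _)
    rw [Subsingleton.elim y 0, Ext.zero_comp]

end Ext

section Modules

variable {A : Type u} [CommRing A]

lemma shortExact_of_exact {X Y Z : Type u} [AddCommGroup X] [Module A X] [AddCommGroup Y]
    [Module A Y] [AddCommGroup Z] [Module A Z] {f : X →ₗ[A] Y} {g : Y →ₗ[A] Z}
    (hfg : Function.Exact f g) (hf : Function.Injective f) (hg : Function.Surjective g) :
    (ModuleCat.shortComplexOfCompEqZero f g hfg.linearMap_comp_eq_zero).ShortExact :=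
  ModuleCat.shortComplex_shortExact _ hfg hf hg

lemma injective_of_forall_ideal_ext_one (M : ModuleCat.{u} A)
    (h : ∀ I : Ideal A, Subsingleton (Ext (ModuleCat.of A (A ⧸ I)) M 1)) : Injective M := by
  refine (Module.injective_iff_injective_object A M).1 (Module.Baer.iff_injective.1 fun I φ => ?_)
  have hS := shortExact_of_exact (LinearMap.exact_subtype_mkQ I) I.subtype_injective
    I.mkQ_surjective
  obtain ⟨ψ, hψ⟩ := (subsingleton_ext_one_X₃_iff hS
    (Ext.subsingleton_of_projective (ModuleCat.of A A) M 0)).1 (h I) (ModuleCat.ofHom φ)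
  exact ⟨ψ.hom, fun x hx => congr($hψ ⟨x, hx⟩)⟩

lemma hasInjectiveDimensionLT_of_forall_finite (M : ModuleCat.{u} A) (n : ℕ)
    (h : ∀ L : ModuleCat.{u} A, Module.Finite A L → Subsingleton (Ext L M n)) :
    HasInjectiveDimensionLT M n := by
  induction n using Nat.twoStepInduction generalizing M with
  | zero =>
    have : Subsingleton (ModuleCat.of A A ⟶ M) :=
      Ext.homEquiv₀.subsingleton_congr.1 (h (ModuleCat.of A A) inferInstance)
    have : Subsingleton M := (ModuleCat.homAddEquiv.toEquiv.trans
      (LinearMap.ringLmapEquivSelf A ℕ M).toEquiv).subsingleton_congr.1 this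
    exact (ModuleCat.isZero_of_subsingleton M).hasInjectiveDimensionLT_zero
  | one =>
    rw [← injective_iff_hasInjectiveDimensionLT_one]
    exact injective_of_forall_ideal_ext_one M fun I => h _ inferInstance
  | more n _ ih =>
    let S := (EnoughInjectives.presentation M).some.shortComplex
    have hS : S.ShortExact := (EnoughInjectives.presentation M).some.shortExact_shortComplex
    have : Injective S.X₂ := (EnoughInjectives.presentation M).some.injective
    have vanish (L : ModuleCat.{u} A) (i : ℕ) : Subsingleton (Ext L S.X₂ (i + 1)) :=
      HasInjectiveDimensionLT.subsingleton S.X₂ 1 _ (by omega) L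
    refine (hS.hasInjectiveDimensionLT_X₃_iff n this).1 (ih S.X₃ fun L hL => ?_)
    exact (subsingleton_covariant_ext_X₃_iff hS (vanish L _) (vanish L _)).2 (h L hL)

lemma subsingleton_ext_of_iso {X X' Y : ModuleCat.{u} A} (e : X ≅ X') {i : ℕ}
    (h : Subsingleton (Ext X Y i)) : Subsingleton (Ext X' Y i) :=
  (((extFunctor i).mapIso e.op).app Y).addCommGroupIsoToAddEquiv.subsingleton_congr.2 h

lemma isSMulRegular_quotient_of_isPrime {p : Ideal A} [p.IsPrime] {x : A} (hx : x ∉ p) :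
    IsSMulRegular (A ⧸ p) x :=
  (isSMulRegular_quotient_iff_mem_of_smul_mem p x).2 fun _ h =>
    (Ideal.IsPrime.mem_or_mem ‹_› h).resolve_left hx

end Modules

section Local

variable {A : Type u} [CommRing A] [IsNoetherianRing A] [IsLocalRing A]

lemma subsingleton_ext_of_quotSMulTop {N T : ModuleCat.{u} A} [Module.Finite A N]
    [Module.Finite A T] {x : A} (hx : x ∈ maximalIdeal A) (hreg : IsSMulRegular N x) {i : ℕ}
    (h : Subsingleton (Ext (ModuleCat.of A (QuotSMulTop x N)) T (i + 1))) :
    Subsingleton (Ext N T i) := by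
  have : Module.Finite A (Ext N T i) := ModuleCat.finite_ext A N T i
  by_contra! hnt
  have comp_smul_id (z : Ext N T i) : (Ext.mk₀ (x • 𝟙 N)).comp z (zero_add i) = x • z := by
    rw [Ext.mk₀_smul, Ext.smul_comp, Ext.mk₀_id_comp]
  refine Submodule.top_ne_pointwise_smul_of_mem_jacobson_annihilator
    (maximalIdeal_le_jacobson (Module.annihilator A (Ext N T i)) hx)
    (eq_top_iff.2 fun y _ => ?_).symm
  obtain ⟨(z : Ext N T i), rfl⟩ := Ext.contravariant_sequence_exact₁
    hreg.smulShortComplex_shortExact T y (add_comm 1 i) (h.elim _ _)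
  exact comp_smul_id z ▸ Submodule.smul_mem_pointwise_smul z x ⊤ trivial

lemma subsingleton_ext_of_residueField {T : ModuleCat.{u} A} [Module.Finite A T] {n : ℕ}
    (hsucc : ∀ L : ModuleCat.{u} A, Module.Finite A L → Subsingleton (Ext L T (n + 1)))
    (hk : Subsingleton (Ext (ModuleCat.of A (A ⧸ maximalIdeal A)) T n))
    (N : Type u) [AddCommGroup N] [Module A N] [hN : Module.Finite A N] :
    Subsingleton (Ext (ModuleCat.of A N) T n) := by
  induction hN using IsNoetherianRing.induction_on_isQuotientEquivQuotientPrime A with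
  | subsingleton N =>
    have := (ModuleCat.isZero_of_subsingleton (ModuleCat.of A N)).hasProjectiveDimensionLT_zero
    exact HasProjectiveDimensionLT.subsingleton _ 0 n n.zero_le T
  | quotient N p e =>
    refine subsingleton_ext_of_iso e.symm.toModuleIso ?_
    by_cases hp : p.1 = maximalIdeal A
    · rwa [hp]
    · have := p.2
      obtain ⟨x, hxm, hxp⟩ := SetLike.exists_of_lt ((le_maximalIdeal p.2.ne_top).lt_of_ne hp)
      exact subsingleton_ext_of_quotSMulTop hxm (isSMulRegular_quotient_of_isPrime hxp)
        (hsucc _ inferInstance)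
  | exact N₁ N₂ N₃ f g hf hg hfg h₁ h₃ =>
    exact subsingleton_ext_X₂ (shortExact_of_exact hfg hf hg) h₁ h₃

lemma nontrivial_ext_residueField {T : ModuleCat.{u} A} [Module.Finite A T] {n : ℕ}
    (hn : injectiveDimension T = n) :
    Nontrivial (Ext (ModuleCat.of A (A ⧸ maximalIdeal A)) T n) := by
  have : HasInjectiveDimensionLT T (n + 1) := (injectiveDimension_le_iff T n).1 hn.le
  by_contra! hk
  refine (injectiveDimension_lt_iff.2 <| hasInjectiveDimensionLT_of_forall_finite T n fun L _ =>
    subsingleton_ext_of_residueField (fun L _ => ?_) hk L).ne hn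
  exact HasInjectiveDimensionLT.subsingleton T (n + 1) _ le_rfl L

end Local

section Depth

variable {A : Type u} [CommRing A] {N : Type u} [AddCommGroup N] [Module A N]

lemma le_rdepth_iff {s : ℕ} : (s : ℕ∞) ≤ rdepth A N ↔
    ∃ rs : List A, rs.length = s ∧ (∀ r ∈ rs, r ∈ nonunits A) ∧ IsWeaklyRegular N rs := by
  constructor
  · rcases s with _ | s
    · exact fun _ => ⟨[], rfl, by simp, .nil A N⟩
    · intro h
      obtain ⟨_, ⟨rs, rfl, hunit, hreg⟩, hlt⟩ :=
        lt_sSup_iff.1 ((ENat.natCast_lt_natCast.2 s.lt_succ_self).trans_le h)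
      refine ⟨rs.take (s + 1), List.length_take_of_le (ENat.natCast_lt_natCast.1 hlt),
        fun r hr => hunit r (List.mem_of_mem_take hr), ?_⟩
      rw [← List.take_append_drop (s + 1) rs, isWeaklyRegular_append_iff] at hreg
      exact hreg.1
  · rintro ⟨rs, rfl, hunit, hreg⟩
    exact le_sSup ⟨rs, rfl, hunit, hreg⟩

lemma succ_le_rdepth_iff [IsLocalRing A] {s : ℕ} : ((s + 1 : ℕ) : ℕ∞) ≤ rdepth A N ↔
    ∃ x ∈ maximalIdeal A, IsSMulRegular N x ∧ (s : ℕ∞) ≤ rdepth A (QuotSMulTop x N) := by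
  simp only [le_rdepth_iff]
  constructor
  · rintro ⟨_ | ⟨x, rs⟩, hlen, hunit, hreg⟩
    · simp at hlen
    · rw [isWeaklyRegular_cons_iff] at hreg
      rw [List.forall_mem_cons] at hunit
      exact ⟨x, hunit.1, hreg.1, rs, Nat.succ.inj hlen, hunit.2, hreg.2⟩
  · rintro ⟨x, hx, hxreg, rs, rfl, hunit, hreg⟩
    exact ⟨x :: rs, rfl, List.forall_mem_cons.2 ⟨hx, hunit⟩,
      (isWeaklyRegular_cons_iff N x rs).2 ⟨hxreg, hreg⟩⟩

lemma rdepth_le_ringKrullDim [IsNoetherianRing A] [IsLocalRing A] [Module.Finite A N]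
    [Nontrivial N] : (rdepth A N : WithBot ℕ∞) ≤ ringKrullDim A := by
  obtain ⟨d, hd⟩ := WithBot.ne_bot_iff_exists.1 (ringKrullDim_ne_bot (R := A))
  rw [← hd, WithBot.coe_le_coe]
  refine sSup_le ?_
  rintro _ ⟨rs, rfl, hunit, hweak⟩
  rw [← WithBot.coe_le_coe, hd]
  have hreg : IsRegular N rs := (isRegular_iff_isWeaklyRegular_of_subset_maximalIdeal hunit).2 hweak
  have : Nontrivial (N ⧸ Ideal.ofList rs • (⊤ : Submodule A N)) :=
    Submodule.Quotient.nontrivial_iff.2 hreg.2.symm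
  have hnonneg : 0 ≤ Module.supportDim A (N ⧸ Ideal.ofList rs • (⊤ : Submodule A N)) :=
    Order.krullDim_nonneg_iff.2 (Module.nonempty_support_of_nontrivial.to_subtype)
  calc ((rs.length : ℕ∞) : WithBot ℕ∞)
      ≤ Module.supportDim A (N ⧸ Ideal.ofList rs • (⊤ : Submodule A N)) + rs.length :=
        le_add_of_nonneg_left hnonneg
    _ = Module.supportDim A N := Module.supportDim_add_length_eq_supportDim_of_isRegular rs hreg
    _ ≤ ringKrullDim A := Module.supportDim_le_ringKrullDim A N

end Depth

section Duality

variable {A : Type u} [CommRing A] [IsNoetherianRing A] [IsLocalRing A]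
  {T : ModuleCat.{u} A} [Module.Finite A T] {n : ℕ}

lemma exists_isSMulRegular_of_subsingleton_ext (hn : injectiveDimension T = n)
    {N : Type u} [AddCommGroup N] [Module A N] [Module.Finite A N]
    (hN : Subsingleton (Ext (ModuleCat.of A N) T n)) : ∃ x ∈ maximalIdeal A, IsSMulRegular N x := by
  have : HasInjectiveDimensionLT T (n + 1) := (injectiveDimension_le_iff T n).1 hn.le
  have : IsSimpleModule A (A ⧸ maximalIdeal A) :=
    isSimpleModule_iff_isCoatom.2 (Ideal.isMaximal_def.1 inferInstance)
  have hhom : Subsingleton ((A ⧸ maximalIdeal A) →ₗ[A] N) := by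
    refine subsingleton_of_forall_eq 0 fun f => f.injective_or_eq_zero.resolve_left fun hf => ?_
    have hS := shortExact_of_exact (LinearMap.exact_map_mkQ_range f) hf (Submodule.mkQ_surjective _)
    exact not_subsingleton_iff_nontrivial.2 (nontrivial_ext_residueField hn)
      (subsingleton_ext_X₁ hS hN (HasInjectiveDimensionLT.subsingleton T (n + 1) _ le_rfl _))
  simpa only [Ideal.annihilator_quotient] using IsSMulRegular.subsingleton_linearMap_iff.1 hhom

-- Ischebeck's formula: dividing `N` by a regular element lowers its depth by one and, by Nakayama,
-- raises the top degree in which `Ext(N, T)` is nonzero by one.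
lemma le_rdepth_iff_subsingleton_ext (hn : injectiveDimension T = n) {s : ℕ}
    {N : Type u} [AddCommGroup N] [Module A N] [Module.Finite A N] :
    (s : ℕ∞) ≤ rdepth A N ↔ ∀ i, n < i + s → Subsingleton (Ext (ModuleCat.of A N) T i) := by
  have : HasInjectiveDimensionLT T (n + 1) := (injectiveDimension_le_iff T n).1 hn.le
  induction s generalizing N with
  | zero =>
    simp only [CharP.cast_eq_zero, zero_le, true_iff]
    exact fun i hi => HasInjectiveDimensionLT.subsingleton T (n + 1) i hi _
  | succ s ih =>
    rw [succ_le_rdepth_iff]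
    constructor
    · rintro ⟨x, hx, hreg, hs⟩ i hi
      exact subsingleton_ext_of_quotSMulTop hx hreg (ih.1 hs (i + 1) (by omega))
    · intro hN
      obtain ⟨x, hx, hreg⟩ := exists_isSMulRegular_of_subsingleton_ext hn (hN n (by omega))
      have hS := IsSMulRegular.smulShortComplex_shortExact (M := ModuleCat.of A N) hreg
      refine ⟨x, hx, hreg, ih.2 fun i hi => ?_⟩
      rcases i with _ | i
      · exact subsingleton_ext_zero_X₃ hS (hN 0 (by omega))
      · exact subsingleton_ext_X₃ hS (hN i (by omega)) (hN (i + 1) (by omega))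

end Duality

section SemiGorensteinProjective

variable {A : Type u} [CommRing A] {X Y Z : Type u} [AddCommGroup X] [Module A X]
  [AddCommGroup Y] [Module A Y] [AddCommGroup Z] [Module A Z] {f : X →ₗ[A] Y} {g : Y →ₗ[A] Z}

variable (A X) in
/-- `X` is semi-Gorenstein-projective: `Ext^i_A(X, A) = 0` for all `i > 0`. Over a Gorenstein local
ring these are the zero module and the maximal Cohen-Macaulay modules (among the finite ones). -/
def IsSemiGorensteinProjective : Prop :=
  ∀ i : ℕ, Subsingleton (Ext (ModuleCat.of A X) (ModuleCat.of A A) (i + 1))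

lemma isSemiGorensteinProjective_of_projective [Module.Projective A X] :
    IsSemiGorensteinProjective A X :=
  fun i => Ext.subsingleton_of_projective _ _ i

lemma IsSemiGorensteinProjective.of_exact (hfg : Function.Exact f g) (hf : Function.Injective f)
    (hg : Function.Surjective g) (hY : IsSemiGorensteinProjective A Y)
    (hZ : IsSemiGorensteinProjective A Z) : IsSemiGorensteinProjective A X :=
  fun i => subsingleton_ext_X₁ (shortExact_of_exact hfg hf hg) (hY i) (hZ (i + 1))

lemma dualMap_surjective_iff_subsingleton_ext_one (hfg : Function.Exact f g)
    (hf : Function.Injective f) (hg : Function.Surjective g) [Module.Projective A Y] :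
    Function.Surjective f.dualMap ↔ Subsingleton (Ext (ModuleCat.of A Z) (ModuleCat.of A A) 1) := by
  refine Iff.trans ?_ (subsingleton_ext_one_X₃_iff (shortExact_of_exact hfg hf hg)
    (isSemiGorensteinProjective_of_projective 0)).symm
  constructor
  · intro h φ
    obtain ⟨ψ, hψ⟩ := h φ.hom
    exact ⟨ModuleCat.ofHom ψ, ModuleCat.hom_ext hψ⟩
  · intro h φ
    obtain ⟨ψ, hψ⟩ := h (ModuleCat.ofHom φ)
    exact ⟨ψ.hom, congrArg ModuleCat.Hom.hom hψ⟩

lemma IsSemiGorensteinProjective.of_dualMap_surjective (hfg : Function.Exact f g)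
    (hf : Function.Injective f) (hg : Function.Surjective g) [Module.Projective A Y]
    (hX : IsSemiGorensteinProjective A X) (hdual : Function.Surjective f.dualMap) :
    IsSemiGorensteinProjective A Z
  | 0 => (dualMap_surjective_iff_subsingleton_ext_one hfg hf hg).1 hdual
  | i + 1 => subsingleton_ext_X₃ (shortExact_of_exact hfg hf hg) (hX i)
      (isSemiGorensteinProjective_of_projective (i + 1))

lemma exact_dualMap (hfg : Function.Exact f g) (hg : Function.Surjective g) :
    Function.Exact g.dualMap f.dualMap :=
  LinearMap.exact_lcomp_of_exact_of_surjective A hfg hg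

lemma IsSemiGorensteinProjective.exists_finite_presentation [IsNoetherianRing A]
    [Module.Finite A X] (hX : IsSemiGorensteinProjective A X) :
    ∃ (P : Type u) (_ : AddCommGroup P) (_ : Module A P) (_ : Module.Finite A P)
      (_ : Module.Projective A P) (π : P →ₗ[A] X), Function.Surjective π ∧
      IsSemiGorensteinProjective A (LinearMap.ker π) ∧
      Function.Surjective (LinearMap.ker π).subtype.dualMap := by
  obtain ⟨P, _, _, _, _, π, hπ⟩ := Module.exists_finite_presentation A X
  have hexact : Function.Exact (LinearMap.ker π).subtype π := LinearMap.exact_subtype_ker_map π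
  have hinj := (LinearMap.ker π).subtype_injective
  exact ⟨P, _, _, inferInstance, inferInstance, π, hπ,
    .of_exact hexact hinj hπ isSemiGorensteinProjective_of_projective hX,
    (dualMap_surjective_iff_subsingleton_ext_one hexact hinj hπ).2 (hX 0)⟩

lemma IsSemiGorensteinProjective.dual [IsNoetherianRing A]
    (hA : injectiveDimension (ModuleCat.of A A) ≠ ⊤) [Module.Finite A X]
    (hX : IsSemiGorensteinProjective A X) : IsSemiGorensteinProjective A (Module.Dual A X) := by
  obtain ⟨n, hn⟩ := (injectiveDimension_ne_top_iff _).1 hA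
  -- Descending induction on the degree: for a syzygy `K` of `N`, the sequence
  -- `0 → N* → P* → K* → 0` is exact, so `Ext^i(N*, A)` vanishes as soon as `Ext^(i+1)(K*, A)` does.
  suffices vanish : ∀ j i, n < i + 1 + j → ∀ (N : Type u) [AddCommGroup N] [Module A N]
      [Module.Finite A N], IsSemiGorensteinProjective A N →
      Subsingleton (Ext (ModuleCat.of A (Module.Dual A N)) (ModuleCat.of A A) (i + 1)) from
    fun i => vanish n i (by omega) X hX
  intro j
  induction j with
  | zero => exact fun i hi N _ _ _ _ => HasInjectiveDimensionLT.subsingleton _ (n + 1) (i + 1) hi _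
  | succ j ih =>
    intro i hi N _ _ _ hN
    obtain ⟨P, _, _, _, _, π, hπ, hK, hdual⟩ := hN.exists_finite_presentation
    have hS := shortExact_of_exact (exact_dualMap (LinearMap.exact_subtype_ker_map π) hπ)
      (LinearMap.dualMap_injective_of_surjective hπ) hdual
    exact subsingleton_ext_X₁ hS (isSemiGorensteinProjective_of_projective i)
      (ih (i + 1) (by omega) _ hK)

lemma IsSemiGorensteinProjective.surjective_dual_eval [IsNoetherianRing A]
    (hA : injectiveDimension (ModuleCat.of A A) ≠ ⊤) [Module.Finite A X]
    (hX : IsSemiGorensteinProjective A X) : Function.Surjective (Module.Dual.eval A X) := by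
  obtain ⟨P, _, _, _, _, π, hπ, hK, hdual⟩ := hX.exists_finite_presentation
  have hπdd : Function.Surjective π.dualMap.dualMap :=
    (dualMap_surjective_iff_subsingleton_ext_one
      (exact_dualMap (LinearMap.exact_subtype_ker_map π) hπ)
      (LinearMap.dualMap_injective_of_surjective hπ) hdual).2 (hK.dual hA 0)
  refine Function.Surjective.of_comp (g := π) ?_
  exact hπdd.comp (Module.bijective_dual_eval A P).2

theorem IsSemiGorensteinProjective.isReflexive [IsNoetherianRing A]
    (hA : injectiveDimension (ModuleCat.of A A) ≠ ⊤) [Module.Finite A X]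
    (hX : IsSemiGorensteinProjective A X) : Module.IsReflexive A X := by
  refine ⟨(injective_iff_map_eq_zero _).2 fun x hx => ?_, hX.surjective_dual_eval hA⟩
  obtain ⟨P, _, _, _, _, π, hπ, hK, hdual⟩ := hX.exists_finite_presentation
  obtain ⟨y, rfl⟩ := hπ x
  have hexact : Function.Exact (LinearMap.ker π).subtype.dualMap.dualMap π.dualMap.dualMap :=
    exact_dualMap (exact_dualMap (LinearMap.exact_subtype_ker_map π) hπ) hdual
  obtain ⟨ξ, hξ⟩ := (hexact (Module.Dual.eval A P y)).1 hx
  obtain ⟨k, rfl⟩ := hK.surjective_dual_eval hA ξ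
  have hk : (k : P) = y := (Module.bijective_dual_eval A P).1 hξ
  exact hk ▸ k.2

lemma injective_of_dualMap_surjective [Module.IsReflexive A X]
    (hf : Function.Surjective f.dualMap) : Function.Injective f := by
  refine fun x y hxy => (Module.bijective_dual_eval A X).1 (LinearMap.ext fun φ => ?_)
  obtain ⟨ψ, rfl⟩ := hf φ
  exact congrArg ψ hxy

end SemiGorensteinProjective

section Gorenstein

variable {A : Type u} [CommRing A] [IsNoetherianRing A] [IsLocalRing A]
  {N : Type u} [AddCommGroup N] [Module A N] [Module.Finite A N]

lemma le_rdepth_iff_isSemiGorensteinProjective {n : ℕ}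
    (hn : injectiveDimension (ModuleCat.of A A) = n) :
    (n : ℕ∞) ≤ rdepth A N ↔ IsSemiGorensteinProjective A N := by
  rw [le_rdepth_iff_subsingleton_ext hn]
  exact ⟨fun h i => h (i + 1) (by omega),
    fun h i hi => by obtain ⟨i, rfl⟩ := Nat.exists_eq_add_one.2 (by omega : 0 < i); exact h i⟩

lemma IsMCM.ringKrullDim_eq {n : ℕ} (hn : injectiveDimension (ModuleCat.of A A) = n)
    (hN : IsMCM A N) : ringKrullDim A = n := by
  have hle : (n : WithBot ℕ∞) ≤ ringKrullDim A :=
    (WithBot.coe_le_coe.2 ((le_rdepth_iff_isSemiGorensteinProjective (N := A) hn).2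
      isSemiGorensteinProjective_of_projective)).trans rdepth_le_ringKrullDim
  have htop : rdepth A N < ⊤ := WithBot.coe_lt_coe.1 (hN.trans_lt ringKrullDim_lt_top)
  obtain ⟨d, hd⟩ := ENat.ne_top_iff_exists.1 htop.ne
  have hdim : ringKrullDim A = d := by rw [← hN, ← hd]; rfl
  refine le_antisymm (le_of_not_gt fun hlt => ?_) hle
  rw [hdim] at hlt
  have hnd : n < d := by exact_mod_cast hlt
  have hsucc : ((d + 1 : ℕ) : ℕ∞) ≤ rdepth A N := (le_rdepth_iff_subsingleton_ext hn).2 fun i _ =>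
    (le_rdepth_iff_subsingleton_ext hn).1 hd.le i (by omega)
  rw [← hd, Nat.cast_le] at hsucc
  omega

lemma IsMCM.isSemiGorensteinProjective {n : ℕ} (hn : injectiveDimension (ModuleCat.of A A) = n)
    (hN : IsMCM A N) : IsSemiGorensteinProjective A N :=
  (le_rdepth_iff_isSemiGorensteinProjective hn).1
    (WithBot.coe_le_coe.1 (hN.trans (hN.ringKrullDim_eq hn)).ge)

lemma IsSemiGorensteinProjective.isMCM [Nontrivial N] {n : ℕ}
    (hn : injectiveDimension (ModuleCat.of A A) = n) (hdim : ringKrullDim A = n)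
    (hN : IsSemiGorensteinProjective A N) : IsMCM A N :=
  le_antisymm rdepth_le_ringKrullDim
    (hdim.le.trans (WithBot.coe_le_coe.2 ((le_rdepth_iff_isSemiGorensteinProjective hn).2 hN)))

theorem IsMCM.subsingleton_or_isMCM_of_dualMap_surjective {F C : Type u}
    [AddCommGroup F] [Module A F] [Module.Finite A F] [Module.Projective A F]
    [AddCommGroup C] [Module A C] {f : N →ₗ[A] F} {g : F →ₗ[A] C}
    (hA : injectiveDimension (ModuleCat.of A A) ≠ ⊤) (hN : IsMCM A N)
    (hfg : Function.Exact f g) (hg : Function.Surjective g)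
    (hdual : Function.Surjective f.dualMap) :
    Subsingleton C ∨ IsMCM A C := by
  obtain ⟨n, hn⟩ := exists_injectiveDimension_eq
    (fun h => not_subsingleton A (ModuleCat.isZero_iff_subsingleton.1 h)) hA
  have hdim : ringKrullDim A = n := hN.ringKrullDim_eq hn
  have hN' : IsSemiGorensteinProjective A N := hN.isSemiGorensteinProjective hn
  have := hN'.isReflexive hA
  have hC : IsSemiGorensteinProjective A C :=
    .of_dualMap_surjective hfg (injective_of_dualMap_surjective hdual) hg hN' hdual
  have : Module.Finite A C := .of_surjective g hg
  rcases subsingleton_or_nontrivial C with hsub | hnt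
  · exact Or.inl hsub
  · exact Or.inr (hC.isMCM hn hdim)

end Gorenstein

section Localization

variable {R : Type u} [CommRing R]

lemma idLE_iff (n : ℕ) (M : Type u) [AddCommGroup M] [Module R M] :
    idLE R n M ↔ HasInjectiveDimensionLE (ModuleCat.of R M) n := by
  induction n generalizing M with
  | zero =>
    exact (Module.injective_iff_injective_object R M).trans
      injective_iff_hasInjectiveDimensionLT_one
  | succ n ih =>
    have shift {I : Type u} [AddCommGroup I] [Module R I] (hI : Module.Injective R I)
        {f : M →ₗ[R] I} (hf : Function.Injective f) : idLE R n (I ⧸ LinearMap.range f) ↔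
        HasInjectiveDimensionLE (ModuleCat.of R M) (n + 1) := by
      have hS := shortExact_of_exact (LinearMap.exact_map_mkQ_range f) hf
        (Submodule.mkQ_surjective _)
      exact (ih _).trans (hS.hasInjectiveDimensionLT_X₃_iff n
        ((Module.injective_iff_injective_object R I).1 hI))
    constructor
    · rintro ⟨I, _, _, hI, f, hf, hq⟩
      exact (shift hI hf).1 hq
    · intro h
      let ip := (EnoughInjectives.presentation (ModuleCat.of R M)).some
      have hI : Module.Injective R ip.J :=
        (Module.injective_iff_injective_object R ip.J).2 ip.injective
      have hf : Function.Injective ip.f.hom := (ModuleCat.mono_iff_injective ip.f).1 ip.mono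
      exact ⟨ip.J, inferInstance, inferInstance, hI, ip.f.hom, hf, (shift hI hf).2 h⟩

lemma IsGorensteinLocalRing.injectiveDimension_ne_top (hR : IsGorensteinLocalRing R) :
    injectiveDimension (ModuleCat.of R R) ≠ ⊤ :=
  (injectiveDimension_ne_top_iff _).2 (hR.2.2.imp fun n => (idLE_iff n R).1)

lemma IsGorensteinLocalRing.localization (hR : IsGorensteinLocalRing R) (p : Ideal R) [p.IsPrime] :
    IsGorensteinLocalRing (Localization.AtPrime p) := by
  obtain ⟨_, _, n, hn⟩ := hR
  refine ⟨IsLocalization.isNoetherianRing p.primeCompl _ inferInstance, inferInstance, n,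
    (idLE_iff n _).2 ?_⟩
  have := (idLE_iff n R).1 hn
  have : IsLocalizedModule p.primeCompl
      ((ModuleCat.of R R).localizedModuleMkLinearMap p.primeCompl) :=
    ModuleCat.localizedModule_isLocalizedModule (ModuleCat.of R R) p.primeCompl
  have e : (ModuleCat.of R R).localizedModule p.primeCompl ≃ₗ[Localization.AtPrime p]
      ModuleCat.of (Localization.AtPrime p) (Localization.AtPrime p) :=
    LinearEquiv.extendScalarsOfIsLocalization p.primeCompl (Localization.AtPrime p)
      (IsLocalizedModule.linearEquiv p.primeCompl
        ((ModuleCat.of R R).localizedModuleMkLinearMap p.primeCompl)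
        (Algebra.linearMap R (Localization.AtPrime p)))
  exact (ModuleCat.hasInjectiveDimensionLE_iff_of_linearEquiv e n).1
    (ModuleCat.localizedModule_hasInjectiveDimensionLE n p.primeCompl (ModuleCat.of R R))

lemma dualMap_localizedModule_map_surjective {R M F : Type*} [CommRing R] [AddCommGroup M]
    [Module R M] [Module.FinitePresentation R M] [AddCommGroup F] [Module R F] (S : Submonoid R)
    {f : M →ₗ[R] F} (hf : Function.Surjective f.dualMap) :
    Function.Surjective (LocalizedModule.map S f).dualMap := by
  intro φ
  obtain ⟨⟨g, s⟩, hg : s.1 • φ = _⟩ := IsLocalizedModule.surj S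
    (IsLocalizedModule.mapExtendScalars S (LocalizedModule.mkLinearMap S M)
      (Algebra.linearMap R (Localization S)) (Localization S)) φ
  obtain ⟨ψ, rfl⟩ := hf g
  let G := IsLocalizedModule.mapExtendScalars S (LocalizedModule.mkLinearMap S F)
    (Algebra.linearMap R (Localization S)) (Localization S) ψ
  have hG : (LocalizedModule.map S f).dualMap G = (s : R) • φ := by
    rw [hg]
    apply LinearMap.restrictScalars_injective R
    refine IsLocalizedModule.linearMap_ext S (LocalizedModule.mkLinearMap S M)
      (Algebra.linearMap R (Localization S)) (LinearMap.ext fun m => ?_)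
    trans algebraMap R (Localization S) (ψ (f m))
    · exact (congrArg G (LocalizedModule.map_mk S f m 1)).trans (IsLocalizedModule.map_apply S
        (LocalizedModule.mkLinearMap S F) (Algebra.linearMap R (Localization S)) ψ (f m))
    · exact (IsLocalizedModule.map_apply S (LocalizedModule.mkLinearMap S M)
        (Algebra.linearMap R (Localization S)) (f.dualMap ψ) m).symm
  refine ⟨IsLocalization.mk' (Localization S) 1 s • G, ?_⟩
  rw [map_smul, hG, ← algebraMap_smul (Localization S) (s : R) φ, smul_smul,
    IsLocalization.mk'_spec, map_one, one_smul]

lemma dualMap_pushMap_surjective {M : Type u} [AddCommGroup M] [Module R M] {ν : ℕ}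
    {ε : (Fin ν → R) →ₗ[R] Module.Dual R M} (hε : Function.Surjective ε) :
    Function.Surjective (pushMap R M ε).dualMap := by
  intro φ
  obtain ⟨v, rfl⟩ := hε φ
  refine ⟨Fintype.linearCombination R v, LinearMap.ext fun m => ?_⟩
  conv_rhs => rw [pi_eq_sum_univ' v]
  simp [pushMap, Fintype.linearCombination_apply, mul_comm]

end Localization

theorem stmt9_general {R M : Type u} [CommRing R] [AddCommGroup M] [Module R M]
    [Module.FinitePresentation R M] {ν : ℕ} {ε : (Fin ν → R) →ₗ[R] Module.Dual R M}
    (hε : Function.Surjective ε) (p : Ideal R) [p.IsPrime]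
    (hp : IsGorensteinLocalRing (Localization.AtPrime p))
    (hMp : IsMCM (Localization.AtPrime p) (LocalizedModule p.primeCompl M)) :
    Subsingleton (LocalizedModule p.primeCompl
        ((Fin ν → R) ⧸ LinearMap.range (pushMap R M ε))) ∨
      IsMCM (Localization.AtPrime p) (LocalizedModule p.primeCompl
        ((Fin ν → R) ⧸ LinearMap.range (pushMap R M ε))) := by
  have := hp.1
  exact hMp.subsingleton_or_isMCM_of_dualMap_surjective hp.injectiveDimension_ne_top
    (LocalizedModule.map_exact p.primeCompl _ _ (LinearMap.exact_map_mkQ_range (pushMap R M ε)))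
    (LocalizedModule.map_surjective p.primeCompl _ (Submodule.mkQ_surjective _))
    (dualMap_localizedModule_map_surjective p.primeCompl (dualMap_pushMap_surjective hε))

/-- if `M_p` is maximal Cohen-Macaulay then `(M₁)_p` is zero or maximal
Cohen-Macaulay. -/
theorem stmt9 (R : Type u) [CommRing R] (hG : IsGorensteinLocalRing R)
    (M : Type u) [AddCommGroup M] [Module R M] [Module.Finite R M]
    (htf : Submodule.torsion R M = ⊥) (ν : ℕ)
    (ε : (Fin ν → R) →ₗ[R] Module.Dual R M) (hsurj : Function.Surjective ε)
    (hmin : ∀ m : ℕ, m < ν →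
      ¬ ∃ g : (Fin m → R) →ₗ[R] Module.Dual R M, Function.Surjective g) (p : Ideal R) [p.IsPrime]
    (hMp : IsMCM (Localization.AtPrime p) (LocalizedModule p.primeCompl M)) :
    Subsingleton (LocalizedModule p.primeCompl
        ((Fin ν → R) ⧸ LinearMap.range (pushMap R M ε))) ∨
      IsMCM (Localization.AtPrime p) (LocalizedModule p.primeCompl
        ((Fin ν → R) ⧸ LinearMap.range (pushMap R M ε))) := by
  have := hG.1
  have := Module.finitePresentation_of_finite R M
  exact stmt9_general hsurj p (hG.localization p) hMp

end
end
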